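/- arXiv:1603.03134 — 2 statements merged into one kernel-verified Lean document; each statement's English description precedes it below -/
import Mathlib

section
/- There is an absolute constant \(C>0\) such that for every integer \(k\geq 1\), every real \(t\) and every \(0<z<1\), the quantity \(I(z):=\lim_{b\to 0^{+}}\int_{0}^{\infty}e^{-by}J_{2k-1}(y)\,k^{+}(y\sqrt{z},1/2+it)\,dy\) satisfies \(|I(z)|\leq C\Bigl(1+|\log z|+\frac{1}{(2k-1)\sqrt{1-z}}\Bigr)\). -/
open MeasureTheory Filter

/-- The Bessel function of the first kind of complex order `μ`, for real argument `y > 0`: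
`J_μ(y) = ∑_{n≥0} (-1)^n / (Γ(n+1) Γ(n+1+μ)) (y/2)^{μ+2n}`, with powers taken via the real
logarithm. -/
noncomputable def besselJ (μ : ℂ) (y : ℝ) : ℂ :=
  ∑' n : ℕ, ((-1 : ℂ) ^ n / (Complex.Gamma (n + 1) * Complex.Gamma (n + 1 + μ))) *
    Complex.exp ((μ + 2 * n) * Real.log (y / 2))

/-- `k⁺(y,v) = (J_{2v-1}(y) - J_{1-2v}(y)) / (2 cos πv)`. -/
noncomputable def kplus (y : ℝ) (v : ℂ) : ℂ :=
  (besselJ (2 * v - 1) y - besselJ (1 - 2 * v) y) / (2 * Complex.cos (Real.pi * v))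

noncomputable def KB (ν x : ℂ) : ℂ := ∫ u : ℝ, Complex.exp (-x * (Real.cosh u : ℂ) + ν * u)

lemma integrable_real_cosh {a : ℝ} (ha : 0 < a) (m : ℝ) :
    Integrable (fun u : ℝ => Real.exp (-a * Real.cosh u + m * u)) := by
  have h1 := (integrable_cexp_quadratic (b := ((a / 4 : ℝ) : ℂ)) (by simpa using ha) (m : ℂ) 0).norm
  refine h1.mono' (by fun_prop) (ae_of_all _ fun u => ?_)
  rw [Real.norm_of_nonneg (Real.exp_pos _).le, Complex.norm_exp]
  apply Real.exp_le_exp.2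
  have h2 : u ^ 2 / 4 ≤ Real.cosh u := by
    have h := Real.quadratic_le_exp_of_nonneg (abs_nonneg u)
    rw [← Real.cosh_abs, Real.cosh_eq]
    have h' := Real.exp_pos (-|u|)
    rw [sq_abs] at h
    have := abs_nonneg u
    linarith
  have h3 : (-((a / 4 : ℝ) : ℂ) * (u : ℂ) ^ 2 + (m : ℂ) * u + 0).re = -(a / 4) * u ^ 2 + m * u := by
    rw [show (-((a / 4 : ℝ) : ℂ) * (u : ℂ) ^ 2 + (m : ℂ) * u + 0) =
      ((-(a / 4) * u ^ 2 + m * u : ℝ) : ℂ) by push_cast; ring]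
    exact Complex.ofReal_re _
  rw [h3]
  nlinarith

lemma norm_kern (ν x : ℂ) (u : ℝ) :
    ‖Complex.exp (-x * (Real.cosh u : ℂ) + ν * u)‖ = Real.exp (-x.re * Real.cosh u + ν.re * u) := by
  rw [Complex.norm_exp]
  congr 1
  simp only [Complex.add_re, Complex.mul_re, Complex.neg_re, Complex.ofReal_re, Complex.ofReal_im,
    mul_zero, sub_zero]

lemma integrable_kern {x : ℂ} (hx : 0 < x.re) (ν : ℂ) :
    Integrable (fun u : ℝ => Complex.exp (-x * (Real.cosh u : ℂ) + ν * u)) := by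
  refine (integrable_real_cosh hx ν.re).mono' (by fun_prop) (ae_of_all _ fun u => ?_)
  rw [norm_kern]

lemma cosh_kern (ν x : ℂ) (u : ℝ) :
    (Real.cosh u : ℂ) * Complex.exp (-x * (Real.cosh u : ℂ) + ν * u) =
    (1 / 2) * (Complex.exp (-x * (Real.cosh u : ℂ) + (ν + 1) * u) +
      Complex.exp (-x * (Real.cosh u : ℂ) + (ν - 1) * u)) := by
  rw [show -x * (Real.cosh u : ℂ) + (ν + 1) * u = (-x * (Real.cosh u : ℂ) + ν * u) + u by ring,
    show -x * (Real.cosh u : ℂ) + (ν - 1) * u = (-x * (Real.cosh u : ℂ) + ν * u) + -u by ring,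
    Complex.exp_add _ (u : ℂ), Complex.exp_add _ (-u : ℂ)]
  generalize Complex.exp (-x * (Real.cosh u : ℂ) + ν * u) = E
  rw [Complex.ofReal_cosh, Complex.cosh]; ring

lemma sinh_kern (ν x : ℂ) (u : ℝ) :
    (Real.sinh u : ℂ) * Complex.exp (-x * (Real.cosh u : ℂ) + ν * u) =
    (1 / 2) * (Complex.exp (-x * (Real.cosh u : ℂ) + (ν + 1) * u) -
      Complex.exp (-x * (Real.cosh u : ℂ) + (ν - 1) * u)) := by
  rw [show -x * (Real.cosh u : ℂ) + (ν + 1) * u = (-x * (Real.cosh u : ℂ) + ν * u) + u by ring,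
    show -x * (Real.cosh u : ℂ) + (ν - 1) * u = (-x * (Real.cosh u : ℂ) + ν * u) + -u by ring,
    Complex.exp_add _ (u : ℂ), Complex.exp_add _ (-u : ℂ)]
  generalize Complex.exp (-x * (Real.cosh u : ℂ) + ν * u) = E
  rw [Complex.ofReal_sinh, Complex.sinh]; ring

lemma KB_rec {x : ℂ} (hx : 0 < x.re) (ν : ℂ) :
    ν * KB ν x = x / 2 * (KB (ν + 1) x - KB (ν - 1) x) := by
  have hd : ∀ u : ℝ, HasDerivAt (fun u : ℝ => Complex.exp (-x * (Real.cosh u : ℂ) + ν * u))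
      (ν * Complex.exp (-x * (Real.cosh u : ℂ) + ν * u) -
        x / 2 * (Complex.exp (-x * (Real.cosh u : ℂ) + (ν + 1) * u) -
      Complex.exp (-x * (Real.cosh u : ℂ) + (ν - 1) * u))) u := by
    intro u
    have h1 : HasDerivAt (fun u : ℝ => (Real.cosh u : ℂ)) (Real.sinh u : ℂ) u :=
      (Real.hasDerivAt_cosh u).ofReal_comp
    have h2 : HasDerivAt (fun u : ℝ => (u : ℂ)) 1 u := Complex.ofRealCLM.hasDerivAt
    have := ((h1.const_mul (-x)).add (h2.const_mul ν)).cexp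
    refine this.congr_deriv ?_
    have h3 := sinh_kern ν x u
    linear_combination (-x) * h3
  have hi0 := integrable_kern hx ν
  have hi1 := integrable_kern hx (ν + 1)
  have hi2 := integrable_kern hx (ν - 1)
  have := integral_eq_zero_of_hasDerivAt_of_integrable hd
    ((hi0.const_mul ν).sub ((hi1.sub hi2).const_mul (x / 2))) hi0
  erw [integral_sub (hi0.const_mul ν) ((hi1.sub hi2).const_mul (x / 2))] at this
  rw [integral_const_mul, integral_const_mul] at this
  erw [integral_sub hi1 hi2] at this
  exact sub_eq_zero.1 this

lemma KB_hasDerivAt {x : ℂ} (hx : 0 < x.re) (ν : ℂ) :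
    HasDerivAt (KB ν) (-(1 / 2) * (KB (ν + 1) x + KB (ν - 1) x)) x := by
  have key := hasDerivAt_integral_of_dominated_loc_of_deriv_le (𝕜 := ℂ) (μ := volume)
    (F := fun (x : ℂ) (u : ℝ) => Complex.exp (-x * (Real.cosh u : ℂ) + ν * u))
    (F' := fun (x : ℂ) (u : ℝ) => -(1 / 2) * (Complex.exp (-x * (Real.cosh u : ℂ) + (ν + 1) * u) +
      Complex.exp (-x * (Real.cosh u : ℂ) + (ν - 1) * u)))
    (x₀ := x) (s := Metric.ball x (x.re / 2))
    (bound := fun u => (1 / 2) * (Real.exp (-(x.re / 2) * Real.cosh u + (ν.re + 1) * u) +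
      Real.exp (-(x.re / 2) * Real.cosh u + (ν.re - 1) * u)))
    (Metric.ball_mem_nhds _ (by linarith))
    (Eventually.of_forall fun x => by fun_prop) (integrable_kern hx ν) (by fun_prop)
    (ae_of_all _ fun u y hy => ?_)
    (((integrable_real_cosh (half_pos hx) _).add (integrable_real_cosh (half_pos hx) _)).const_mul _)
    (ae_of_all _ fun u y hy => ?_)
  · have := key.2
    rw [integral_const_mul] at this
    erw [integral_add (integrable_kern hx (ν + 1)) (integrable_kern hx (ν - 1))] at this
    exact this
  · have h1 : x.re / 2 ≤ y.re := by
      have h2 : |(y - x).re| < x.re / 2 := lt_of_le_of_lt (Complex.abs_re_le_norm _) (by simpa [dist_eq_norm] using hy)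
      rw [Complex.sub_re, abs_lt] at h2
      linarith
    rw [norm_mul]
    refine mul_le_mul (by norm_num) ((norm_add_le _ _).trans ?_) (norm_nonneg _) (by norm_num)
    rw [norm_kern, norm_kern]
    have h3 := Real.cosh_pos u
    simp only [Complex.add_re, Complex.sub_re, Complex.one_re]
    gcongr
  · have h1 : HasDerivAt (fun x : ℂ => -x * (Real.cosh u : ℂ) + ν * u) (-(Real.cosh u : ℂ)) y := by
      have := (((hasDerivAt_id y).neg).mul_const (Real.cosh u : ℂ)).add_const (ν * u)
      simpa using this
    refine h1.cexp.congr_deriv ?_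
    linear_combination (-1) * cosh_kern ν y u

lemma KB_neg (ν x : ℂ) : KB (-ν) x = KB ν x := by
  unfold KB
  rw [← integral_neg_eq_self]
  congr 1; ext u
  simp [Real.cosh_neg]


noncomputable def PB (ν w : ℂ) : ℂ :=
  ∑' n : ℕ, ((n.factorial : ℂ) * Complex.Gamma (n + 1 + ν))⁻¹ * w ^ n

lemma inv_Gamma_bound {ν : ℂ} (hν : 0 ≤ ν.re) (n : ℕ) :
    ‖(Complex.Gamma (n + 1 + ν))⁻¹‖ ≤ ‖(Complex.Gamma (1 + ν))⁻¹‖ := by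
  induction n with
  | zero => simp
  | succ n ih =>
    have h0 : (n : ℝ) + 1 ≤ ‖(n : ℂ) + 1 + ν‖ := by
      refine le_trans ?_ (Complex.re_le_norm _)
      simpa using hν
    have hn : (0 : ℝ) ≤ n := Nat.cast_nonneg n
    have h1 : (n : ℂ) + 1 + ν ≠ 0 := by
      intro h; rw [h, norm_zero] at h0; linarith
    rw [show ((n + 1 : ℕ) : ℂ) + 1 + ν = (n + 1 + ν) + 1 by push_cast; ring,
      Complex.Gamma_add_one _ h1, mul_inv, norm_mul]
    refine le_trans ?_ ih
    refine mul_le_of_le_one_left (norm_nonneg _) ?_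
    rw [norm_inv]
    exact inv_le_one_of_one_le₀ (by linarith)

lemma PB_coeff_bound {ν : ℂ} (hν : 0 ≤ ν.re) (n : ℕ) :
    ‖((n.factorial : ℂ) * Complex.Gamma (n + 1 + ν))⁻¹‖ ≤
      ‖(Complex.Gamma (1 + ν))⁻¹‖ / n.factorial := by
  rw [mul_inv, norm_mul, mul_comm, div_eq_mul_inv]
  gcongr
  · exact inv_Gamma_bound hν n
  · simp

lemma PB_summable {ν : ℂ} (hν : 0 ≤ ν.re) (w : ℂ) :
    Summable (fun n : ℕ => ((n.factorial : ℂ) * Complex.Gamma (n + 1 + ν))⁻¹ * w ^ n) := by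
  refine Summable.of_norm_bounded
    ((Real.summable_pow_div_factorial ‖w‖).mul_left ‖(Complex.Gamma (1 + ν))⁻¹‖) fun n => ?_
  rw [norm_mul, norm_pow]
  calc _ ≤ ‖(Complex.Gamma (1 + ν))⁻¹‖ / n.factorial * ‖w‖ ^ n := by
        gcongr; exact PB_coeff_bound hν n
    _ = _ := by ring

lemma PB_shift {ν : ℂ} (hν : 0 ≤ ν.re) (w : ℂ) :
    HasSum (fun n : ℕ => ((n.factorial : ℂ) * Complex.Gamma (n + 1 + ν))⁻¹ * (n * w ^ (n - 1)))
      (PB (ν + 1) w) := by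
  rw [← hasSum_nat_add_iff' 1]
  simp only [Finset.range_one, Finset.sum_singleton, Nat.cast_zero, zero_mul, mul_zero, sub_zero]
  have h := (PB_summable (ν := ν + 1) (by simp; linarith) w).hasSum
  refine Eq.mpr (congrArg (fun f => HasSum f (PB (ν + 1) w)) (funext fun n => ?_)) h
  have h1 : ((n : ℂ) + 1) ≠ 0 := by exact_mod_cast Nat.succ_ne_zero n
  rw [Nat.add_sub_cancel, Nat.factorial_succ]
  push_cast
  rw [show (n : ℂ) + 1 + 1 + ν = n + 1 + (ν + 1) by ring, mul_inv, mul_inv, mul_inv]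
  field_simp

lemma PB_hasDerivAt {ν : ℂ} (hν : 0 ≤ ν.re) (w : ℂ) :
    HasDerivAt (PB ν) (PB (ν + 1) w) w := by
  have h := hasDerivAt_tsum_of_isPreconnected (𝕜 := ℂ)
    (g := fun (n : ℕ) (w : ℂ) => ((n.factorial : ℂ) * Complex.Gamma (n + 1 + ν))⁻¹ * w ^ n)
    (g' := fun (n : ℕ) (w : ℂ) => ((n.factorial : ℂ) * Complex.Gamma (n + 1 + ν))⁻¹ *
      (n * w ^ (n - 1)))
    (u := fun n => ‖(Complex.Gamma (1 + ν))⁻¹‖ * ((2 * (‖w‖ + 1)) ^ n / n.factorial))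
    (t := Metric.ball 0 (‖w‖ + 1)) (y₀ := w) (y := w)
    ((Real.summable_pow_div_factorial _).mul_left _) Metric.isOpen_ball
    (convex_ball _ _).isPreconnected ?_ ?_ (by simp) (PB_summable hν w) (by simp)
  · rw [(PB_shift hν w).tsum_eq] at h
    exact h
  · intro n y _
    exact (hasDerivAt_pow n y).const_mul _
  · intro n y hy
    have hy' : ‖y‖ ≤ ‖w‖ + 1 := by
      have : ‖y‖ < ‖w‖ + 1 := by simpa using hy
      exact this.le
    rw [norm_mul, norm_mul, norm_pow, Complex.norm_natCast]
    have h1 : (n : ℝ) ≤ 2 ^ n := by exact_mod_cast Nat.lt_two_pow_self.le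
    have h2 : ‖y‖ ^ (n - 1) ≤ (‖w‖ + 1) ^ n := by
      calc ‖y‖ ^ (n - 1) ≤ (‖w‖ + 1) ^ (n - 1) := by gcongr
        _ ≤ _ := pow_le_pow_right₀ (by linarith [norm_nonneg w]) (Nat.sub_le _ _)
    calc _ ≤ ‖(Complex.Gamma (1 + ν))⁻¹‖ / n.factorial * (2 ^ n * (‖w‖ + 1) ^ n) := by
          gcongr; exact PB_coeff_bound hν n
      _ = _ := by rw [mul_pow]; ring

lemma PB_rec {ν : ℂ} (hν : 0 ≤ ν.re) (w : ℂ) :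
    PB ν w = (ν + 1) * PB (ν + 1) w + w * PB (ν + 1 + 1) w := by
  have h1 := (PB_summable (ν := ν + 1) (by simp; linarith) w).hasSum.mul_left (ν + 1)
  have h2 := (PB_shift (ν := ν + 1) (by simp; linarith) w).mul_left w
  have h3 := (h1.add h2).tsum_eq
  rw [PB, PB, ← h3]
  congr 1; ext n
  have hr := Complex.one_div_Gamma_eq_self_mul_one_div_Gamma_add_one (n + 1 + ν)
  rw [mul_inv, hr, show (n : ℂ) + 1 + (ν + 1) = n + 1 + ν + 1 by ring, mul_inv]
  rcases n with _ | n
  · simp only [Nat.cast_zero]; ring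
  · simp only [Nat.add_sub_cancel, pow_succ]; push_cast; ring

lemma PB_zero (ν : ℂ) : PB ν 0 = (Complex.Gamma (1 + ν))⁻¹ := by
  rw [PB, tsum_eq_single 0]
  · simp
  · intro n hn; simp [hn]

noncomputable def PhiB (ν s : ℂ) : ℂ := Complex.exp (ν * s) * PB ν (Complex.exp (2 * s))

lemma PhiB_hasDerivAt {ν : ℂ} (hν : 0 ≤ ν.re) (s : ℂ) :
    HasDerivAt (PhiB ν) (ν * PhiB ν s + 2 * Complex.exp s * PhiB (ν + 1) s) s := by
  have h1 : HasDerivAt (fun s : ℂ => Complex.exp (ν * s)) (Complex.exp (ν * s) * ν) s := by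
    simpa using ((hasDerivAt_id s).const_mul ν).cexp
  have h2 : HasDerivAt (fun s : ℂ => Complex.exp (2 * s)) (Complex.exp (2 * s) * 2) s := by
    simpa using ((hasDerivAt_id s).const_mul 2).cexp
  have h3 := h1.mul ((PB_hasDerivAt hν (Complex.exp (2 * s))).comp s h2)
  refine h3.congr_deriv ?_
  simp only [PhiB, Function.comp_apply]
  rw [show (ν + 1) * s = ν * s + s by ring, Complex.exp_add, show 2 * s = s + s by ring,
    Complex.exp_add]
  ring

lemma PhiB_hasDerivAt' {ν : ℂ} (hν : 0 ≤ ν.re) (s : ℂ) :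
    HasDerivAt (PhiB (ν + 1)) (2 * Complex.exp s * PhiB ν s - (ν + 1) * PhiB (ν + 1) s) s := by
  refine (PhiB_hasDerivAt (ν := ν + 1) (by simp; linarith) s).congr_deriv ?_
  simp only [PhiB]
  rw [PB_rec hν, show (ν + 1 + 1) * s = ν * s + s + s by ring,
    show (ν + 1) * s = ν * s + s by ring, Complex.exp_add (ν * s + s), Complex.exp_add (ν * s),
    show 2 * s = s + s by ring, Complex.exp_add s s]
  ring


lemma re_two_exp_pos {s : ℂ} (hs : |s.im| < Real.pi / 2) : 0 < (2 * Complex.exp s).re := by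
  have h : (2 * Complex.exp s).re = 2 * (Real.exp s.re * Real.cos s.im) := by
    simp [Complex.mul_re, Complex.exp_re]
  rw [h]
  have := Real.cos_pos_of_mem_Ioo (abs_lt.1 hs)
  have := Real.exp_pos s.re
  positivity

lemma KBs_hasDerivAt {s : ℂ} (hs : |s.im| < Real.pi / 2) (ν : ℂ) :
    HasDerivAt (fun s => KB ν (2 * Complex.exp s))
      (ν * KB ν (2 * Complex.exp s) - 2 * Complex.exp s * KB (ν + 1) (2 * Complex.exp s)) s := by
  have hx := re_two_exp_pos hs
  have h1 : HasDerivAt (fun s : ℂ => 2 * Complex.exp s) (2 * Complex.exp s) s :=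
    (Complex.hasDerivAt_exp s).const_mul 2
  refine ((KB_hasDerivAt hx ν).comp s h1).congr_deriv ?_
  have := KB_rec hx ν
  linear_combination (-1) * this

lemma KBs_hasDerivAt' {s : ℂ} (hs : |s.im| < Real.pi / 2) (ν : ℂ) :
    HasDerivAt (fun s => KB (ν + 1) (2 * Complex.exp s))
      (-(2 * Complex.exp s) * KB ν (2 * Complex.exp s) -
        (ν + 1) * KB (ν + 1) (2 * Complex.exp s)) s := by
  have hx := re_two_exp_pos hs
  refine (KBs_hasDerivAt hs (ν + 1)).congr_deriv ?_
  have := KB_rec hx (ν + 1)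
  rw [add_sub_cancel_right] at this
  linear_combination 2 * this

def strip : Set ℂ := {s : ℂ | |s.im| < Real.pi / 2}

lemma strip_open : IsOpen strip := isOpen_lt (by fun_prop) continuous_const

lemma strip_conn : IsPreconnected strip := by
  apply Convex.isPreconnected
  have : strip = Complex.imLm ⁻¹' (Set.Ioo (-(Real.pi / 2)) (Real.pi / 2)) := by
    ext s; simp [strip, abs_lt]
  rw [this]
  exact (convex_Ioo _ _).linear_preimage _

noncomputable def WB (ν s : ℂ) : ℂ := 2 * Complex.exp s *
  (KB ν (2 * Complex.exp s) * PhiB (ν + 1) s + KB (ν + 1) (2 * Complex.exp s) * PhiB ν s)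

lemma WB_hasDerivAt {ν : ℂ} (hν : 0 ≤ ν.re) {s : ℂ} (hs : |s.im| < Real.pi / 2) :
    HasDerivAt (WB ν) 0 s := by
  have h1 : HasDerivAt (fun s : ℂ => 2 * Complex.exp s) (2 * Complex.exp s) s :=
    (Complex.hasDerivAt_exp s).const_mul 2
  have := h1.mul (((KBs_hasDerivAt hs ν).mul (PhiB_hasDerivAt' hν s)).add
    ((KBs_hasDerivAt' hs ν).mul (PhiB_hasDerivAt hν s)))
  refine this.congr_deriv ?_
  simp only [Pi.mul_apply, Pi.add_apply]
  ring

lemma WB_const {ν : ℂ} (hν : 0 ≤ ν.re) {s s' : ℂ} (hs : s ∈ strip) (hs' : s' ∈ strip) :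
    WB ν s = WB ν s' :=
  strip_open.is_const_of_deriv_eq_zero strip_conn
    (fun _ hx => (WB_hasDerivAt hν hx).differentiableAt.differentiableWithinAt)
    (fun _ hx => (WB_hasDerivAt hν hx).deriv) hs hs'

noncomputable def VB (ν s : ℂ) : ℂ := 2 * Complex.exp s *
  (PhiB (ν + 1) s * PhiB (-ν) s - PhiB (-ν + 1) s * PhiB ν s) + 2 * ν * (PhiB (-ν) s * PhiB ν s)

lemma VB_hasDerivAt {ν : ℂ} (hν : ν.re = 0) (s : ℂ) : HasDerivAt (VB ν) 0 s := by
  have h1 : HasDerivAt (fun s : ℂ => 2 * Complex.exp s) (2 * Complex.exp s) s :=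
    (Complex.hasDerivAt_exp s).const_mul 2
  have a1 := PhiB_hasDerivAt hν.ge s
  have a2 := PhiB_hasDerivAt' hν.ge s
  have hν' : 0 ≤ (-ν).re := by simp [hν]
  have b1 := PhiB_hasDerivAt hν' s
  have b2 := PhiB_hasDerivAt' hν' s
  refine ((h1.mul ((a2.mul b1).sub (b2.mul a1))).add ((b1.mul a1).const_mul (2 * ν))).congr_deriv ?_
  simp only [Pi.mul_apply, Pi.sub_apply]
  ring

lemma tendsto_exp_two : Tendsto (fun s : ℝ => Complex.exp (2 * (s : ℂ))) atBot (nhds 0) := by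
  rw [tendsto_zero_iff_norm_tendsto_zero]
  have : ∀ s : ℝ, ‖Complex.exp (2 * (s : ℂ))‖ = Real.exp (2 * s) := by
    intro s; rw [Complex.norm_exp]; simp
  simp_rw [this]
  exact Real.tendsto_exp_atBot.comp (tendsto_id.const_mul_atBot (by norm_num))

lemma PB_tendsto {ν : ℂ} (hν : 0 ≤ ν.re) :
    Tendsto (fun s : ℝ => PB ν (Complex.exp (2 * (s : ℂ)))) atBot
      (nhds (Complex.Gamma (1 + ν))⁻¹) := by
  rw [← PB_zero]
  exact (PB_hasDerivAt hν 0).continuousAt.tendsto.comp tendsto_exp_two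

lemma VB_eq {ν : ℂ} (hν : ν.re = 0) (s : ℂ) :
    VB ν s = 2 * ν * ((Complex.Gamma (1 - ν))⁻¹ * (Complex.Gamma (1 + ν))⁻¹) := by
  have hν' : 0 ≤ (-ν).re := by simp [hν]
  have hc : ∀ s' : ℝ, VB ν s' = VB ν s := fun s' => is_const_of_deriv_eq_zero
    (fun x => (VB_hasDerivAt hν x).differentiableAt) (fun x => (VB_hasDerivAt hν x).deriv) _ _
  have h1 : Tendsto (fun s' : ℝ => VB ν s') atBot (nhds (VB ν s)) := by
    simp_rw [hc]; exact tendsto_const_nhds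
  have e : ∀ s : ℝ, VB ν s = 2 * Complex.exp (2 * (s : ℂ)) *
      (PB (ν + 1) (Complex.exp (2 * (s : ℂ))) * PB (-ν) (Complex.exp (2 * (s : ℂ))) -
        PB (-ν + 1) (Complex.exp (2 * (s : ℂ))) * PB ν (Complex.exp (2 * (s : ℂ)))) +
      2 * ν * (PB (-ν) (Complex.exp (2 * (s : ℂ))) * PB ν (Complex.exp (2 * (s : ℂ)))) := by
    intro s
    have e1 : Complex.exp (-ν * s) * Complex.exp (ν * s) = 1 := by
      rw [← Complex.exp_add]; simp
    simp only [VB, PhiB]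
    rw [show (ν + 1) * s = ν * s + s by ring, show (-ν + 1) * s = -ν * s + s by ring,
      Complex.exp_add, Complex.exp_add]
    have e2 : Complex.exp (2 * (s : ℂ)) = Complex.exp s * Complex.exp s := by
      rw [← Complex.exp_add]; congr 1; ring
    generalize PB (ν + 1) (Complex.exp (2 * (s : ℂ))) = p1
    generalize PB (-ν + 1) (Complex.exp (2 * (s : ℂ))) = p2
    generalize PB (ν) (Complex.exp (2 * (s : ℂ))) = p3
    generalize PB (-ν) (Complex.exp (2 * (s : ℂ))) = p4
    rw [e2]
    linear_combination (2 * Complex.exp s * Complex.exp s * (p1 * p4 - p2 * p3) + 2 * ν * p3 * p4) * e1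
  simp_rw [e] at h1
  have h2 := ((tendsto_exp_two.const_mul 2).mul (((PB_tendsto (ν := ν + 1) (by simp [hν])).mul
    (PB_tendsto hν')).sub ((PB_tendsto (ν := -ν + 1) (by simp [hν])).mul (PB_tendsto hν.ge)))).add
    (((PB_tendsto hν').mul (PB_tendsto hν.ge)).const_mul (2 * ν))
  have := tendsto_nhds_unique h1 h2
  rw [this]
  simp [sub_eq_add_neg]

lemma KBs_scale (μ : ℂ) (s : ℝ) :
    Complex.exp (μ * s) * KB μ (2 * Complex.exp s) =
      ∫ v : ℝ, Complex.exp (μ * v - (Real.exp v : ℂ) - (Real.exp (2 * s - v) : ℂ)) := by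
  rw [KB, ← integral_sub_right_eq_self _ s, ← integral_const_mul]
  congr 1; ext v
  rw [← Complex.exp_add]
  congr 1
  rw [Real.cosh_eq]
  push_cast
  rw [show 2 * (s : ℂ) - v = s + -(v - s) by ring, Complex.exp_add]
  have : Complex.exp v = Complex.exp s * Complex.exp (v - s) := by
    rw [← Complex.exp_add]; congr 1; ring
  rw [this]; ring

lemma image_exp_univ : Real.exp '' Set.univ = Set.Ioi 0 := by
  rw [Set.image_univ, Real.range_exp]

lemma Gamma_exp {μ : ℂ} (hμ : 0 < μ.re) :
    Integrable (fun v : ℝ => Complex.exp (μ * v - (Real.exp v : ℂ))) ∧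
    ∫ v : ℝ, Complex.exp (μ * v - (Real.exp v : ℂ)) = Complex.Gamma μ := by
  have hd : ∀ x ∈ Set.univ, HasDerivWithinAt Real.exp (Real.exp x) Set.univ x :=
    fun x _ => (Real.hasDerivAt_exp x).hasDerivWithinAt
  have e : (fun v : ℝ => |Real.exp v| • (((-Real.exp v).exp : ℂ) * ((Real.exp v : ℝ) : ℂ) ^ (μ - 1)))
      = fun v : ℝ => Complex.exp (μ * v - (Real.exp v : ℂ)) := by
    ext v
    rw [abs_of_pos (Real.exp_pos v), Complex.real_smul, Complex.cpow_def_of_ne_zero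
      (by exact_mod_cast (Real.exp_pos v).ne'), ← Complex.ofReal_log (Real.exp_pos v).le, Real.log_exp]
    push_cast
    rw [← Complex.exp_add, ← Complex.exp_add]
    congr 1; ring
  have h1 := integrableOn_image_iff_integrableOn_abs_deriv_smul MeasurableSet.univ hd
    Real.exp_injective.injOn (fun x : ℝ => ((-x).exp : ℂ) * (x : ℂ) ^ (μ - 1))
  have h2 := integral_image_eq_integral_abs_deriv_smul MeasurableSet.univ hd
    Real.exp_injective.injOn (fun x : ℝ => ((-x).exp : ℂ) * (x : ℂ) ^ (μ - 1))
  rw [image_exp_univ] at h1 h2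
  constructor
  · have h3 := h1.1 (by simpa using Complex.GammaIntegral_convergent hμ)
    rw [← integrableOn_univ]
    rw [← e]; simpa using h3
  · rw [Complex.Gamma_eq_integral hμ, Complex.GammaIntegral, ← e]
    simpa using h2.symm

lemma KBs_tendsto {μ : ℂ} (hμ : 0 < μ.re) :
    Tendsto (fun s : ℝ => Complex.exp (μ * s) * KB μ (2 * Complex.exp s)) atBot
      (nhds (Complex.Gamma μ)) := by
  simp_rw [KBs_scale]
  obtain ⟨hi, hG⟩ := Gamma_exp hμ
  rw [← hG]
  refine tendsto_integral_filter_of_dominated_convergence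
    (fun v => ‖Complex.exp (μ * v - (Real.exp v : ℂ))‖) ?_ ?_ hi.norm ?_
  · exact Eventually.of_forall fun s => by fun_prop
  · refine Eventually.of_forall fun s => ae_of_all _ fun v => ?_
    rw [Complex.norm_exp, Complex.norm_exp]
    apply Real.exp_le_exp.2
    simp only [Complex.sub_re, Complex.ofReal_re]
    linarith [Real.exp_pos (2 * s - v)]
  · refine ae_of_all _ fun v => ?_
    have h1 : Tendsto (fun s : ℝ => Real.exp (2 * s - v)) atBot (nhds 0) := by
      refine Real.tendsto_exp_atBot.comp ?_
      exact tendsto_atBot_add_const_right _ (-v) (tendsto_id.const_mul_atBot (by norm_num : (0 : ℝ) < 2))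
    have h2 : Tendsto (fun s : ℝ => ((Real.exp (2 * s - v) : ℝ) : ℂ)) atBot (nhds ((0 : ℝ) : ℂ)) :=
      (Complex.continuous_ofReal.tendsto _).comp h1
    have h3 := (Complex.continuous_exp.tendsto _).comp
      (h2.const_sub (μ * v - (Real.exp v : ℂ)))
    simpa [Function.comp_def] using h3

lemma WB_eq {ν : ℂ} (hν : ν.re = 0) (hν0 : ν ≠ 0) {s : ℂ} (hs : s ∈ strip) : WB ν s = 2 := by
  have hc : ∀ s' : ℝ, WB ν s' = WB ν s := fun s' =>
    WB_const hν.ge (by simp [strip, Real.pi_pos]) hs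
  have h1 : Tendsto (fun s' : ℝ => WB ν s') atBot (nhds (WB ν s)) := by
    simp_rw [hc]; exact tendsto_const_nhds
  have k1 := KBs_tendsto (μ := ν + 1) (by simp [hν])
  have k2 := KBs_tendsto (μ := -ν + 1) (by simp [hν])
  have e : ∀ s : ℝ, WB ν s = 2 * ((Complex.exp ((ν + 1) * s) * KB (ν + 1) (2 * Complex.exp s)) *
      PB ν (Complex.exp (2 * (s : ℂ)))) +
      2 * ((ν⁻¹ * (Complex.exp (2 * (s : ℂ)) * (Complex.exp ((ν + 1) * s) *
        KB (ν + 1) (2 * Complex.exp s)) - (Complex.exp (2 * (s : ℂ)) * Complex.exp (2 * ν * s)) *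
        (Complex.exp ((-ν + 1) * s) * KB (-ν + 1) (2 * Complex.exp s))))) *
        PB (ν + 1) (Complex.exp (2 * (s : ℂ))) := by
    intro s
    have hr := KB_rec (re_two_exp_pos (s := (s : ℂ)) (by simp [Real.pi_pos])) ν
    have hk : KB (ν - 1) (2 * Complex.exp s) = KB (-ν + 1) (2 * Complex.exp s) := by
      rw [← KB_neg]; congr 1; ring
    rw [hk] at hr
    have hr' : KB ν (2 * Complex.exp s) = ν⁻¹ * (Complex.exp s * (KB (ν + 1) (2 * Complex.exp s) -
      KB (-ν + 1) (2 * Complex.exp s))) := by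
      rw [eq_inv_mul_iff_mul_eq₀ hν0, hr]; ring
    simp only [WB, PhiB]
    rw [hr']
    have e1 : Complex.exp (-ν * s) * Complex.exp (ν * s) = 1 := by
      rw [← Complex.exp_add]; simp
    rw [show (ν + 1) * s = ν * s + s by ring, show (-ν + 1) * s = -ν * s + s by ring,
      show 2 * ν * (s : ℂ) = ν * s + ν * s by ring,
      Complex.exp_add, Complex.exp_add, Complex.exp_add]
    have e2 : Complex.exp (2 * (s : ℂ)) = Complex.exp s * Complex.exp s := by
      rw [← Complex.exp_add]; congr 1; ring
    generalize PB (ν + 1) (Complex.exp (2 * (s : ℂ))) = p1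
    generalize PB (ν) (Complex.exp (2 * (s : ℂ))) = p3
    generalize KB (-ν + 1) (2 * Complex.exp s) = q1
    generalize KB (ν + 1) (2 * Complex.exp s) = q2
    rw [e2]
    linear_combination (2 * ν⁻¹ * Complex.exp s ^ 3 * Complex.exp (ν * s) * q1 * p1) * e1
  simp_rw [e] at h1
  have h0 : Tendsto (fun s : ℝ => Complex.exp (2 * (s : ℂ)) * Complex.exp (2 * ν * s)) atBot
      (nhds 0) := by
    rw [tendsto_zero_iff_norm_tendsto_zero]
    have h := tendsto_zero_iff_norm_tendsto_zero.1 tendsto_exp_two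
    refine h.congr fun s => ?_
    rw [norm_mul, Complex.norm_exp (2 * ν * s)]
    simp [hν]
  have h2 := ((k1.mul (PB_tendsto hν.ge)).const_mul 2).add
    ((((tendsto_exp_two.mul k1).sub (h0.mul k2)).const_mul ν⁻¹ |>.const_mul 2).mul
      (PB_tendsto (ν := ν + 1) (by simp [hν])))
  rw [tendsto_nhds_unique h1 h2]
  have hG : Complex.Gamma (1 + ν) ≠ 0 := Complex.Gamma_ne_zero_of_re_pos (by simp [hν])
  rw [add_comm ν 1]
  field_simp
  simp

lemma KB_eq {ν : ℂ} (hν : ν.re = 0) (hν0 : ν ≠ 0) {s : ℂ} (hs : s ∈ strip) :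
    KB ν (2 * Complex.exp s) * Complex.sin (Real.pi * ν) = Real.pi * (PhiB (-ν) s - PhiB ν s) := by
  have w1 := WB_eq hν hν0 hs
  have w2 := WB_eq (ν := -ν) (by simp [hν]) (neg_ne_zero.2 hν0) hs
  have v := VB_eq hν s
  have hr := KB_rec (re_two_exp_pos hs) ν
  have hk : KB (ν - 1) (2 * Complex.exp s) = KB (-ν + 1) (2 * Complex.exp s) := by
    rw [← KB_neg]; congr 1; ring
  rw [hk] at hr
  have hS : (2 * ν * ((Complex.Gamma (1 - ν))⁻¹ * (Complex.Gamma (1 + ν))⁻¹)) * Real.pi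
      = 2 * Complex.sin (Real.pi * ν) := by
    have h1 := Complex.Gamma_mul_Gamma_one_sub ν
    have h2 := Complex.Gamma_add_one ν hν0
    have hG : Complex.Gamma (1 + ν) ≠ 0 := Complex.Gamma_ne_zero_of_re_pos (by simp [hν])
    have hG' : Complex.Gamma (1 - ν) ≠ 0 := Complex.Gamma_ne_zero_of_re_pos (by simp [hν])
    rw [add_comm ν 1] at h2
    have hG0 : Complex.Gamma ν ≠ 0 := by
      intro h; rw [h, mul_zero] at h2; exact hG h2
    have hpi : (Real.pi : ℂ) ≠ 0 := by exact_mod_cast Real.pi_ne_zero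
    have hs0 : Complex.sin (Real.pi * ν) ≠ 0 := by
      intro h; rw [h, div_zero] at h1; exact mul_ne_zero hG0 hG' h1
    rw [eq_div_iff hs0] at h1
    rw [h2]
    rw [mul_comm (Real.pi : ℂ) ν] at h1 ⊢
    field_simp
    linear_combination (-1) * h1
  simp only [WB, VB, KB_neg] at w1 w2 v
  rw [← v] at hS
  linear_combination (-1/2) * KB ν (2 * Complex.exp s) * hS + (Real.pi / 2) * PhiB (-ν) s * w1 -
    (Real.pi / 2) * PhiB ν s * w2 + Real.pi * PhiB ν s * PhiB (-ν) s * hr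


lemma besselJ_eq (ν : ℂ) (y : ℝ) :
    besselJ ν y = Complex.exp (ν * Real.log (y / 2)) *
      PB ν (-Complex.exp (2 * (Real.log (y / 2) : ℂ))) := by
  rw [besselJ, PB, ← tsum_mul_left]
  congr 1; ext n
  rw [Complex.Gamma_nat_eq_factorial, add_mul, Complex.exp_add, neg_pow (Complex.exp _),
    ← Complex.exp_nat_mul, show (n : ℂ) * (2 * (Real.log (y / 2) : ℂ)) = 2 * n * Real.log (y / 2) by ring]
  ring

lemma PhiB_J (ν : ℂ) (y : ℝ) {δ : ℂ} (hδ : Complex.exp (2 * δ) = -1) :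
    PhiB ν (Real.log (y / 2) + δ) = Complex.exp (ν * δ) * besselJ ν y := by
  rw [besselJ_eq, PhiB, mul_add, mul_add, Complex.exp_add, Complex.exp_add, hδ]
  rw [mul_neg_one]; ring

lemma exp_pi_I_half : Complex.exp (2 * (Real.pi / 2 * Complex.I)) = -1 := by
  rw [← Complex.exp_pi_mul_I]; congr 1; ring

lemma exp_pi_I_half' : Complex.exp (2 * (-(Real.pi / 2 * Complex.I))) = -1 := by
  rw [mul_neg, Complex.exp_neg, exp_pi_I_half]; norm_num

lemma log_lim {a : ℝ} (ha : 0 < a) {ι δ : ℂ} (hι : Complex.log ι = δ) (hι' : ι ∈ Complex.slitPlane) :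
    Tendsto (fun ε : ℝ => Complex.log (ε + a * ι)) (nhdsWithin 0 (Set.Ioi 0))
      (nhds (Real.log a + δ)) := by
  have h0 : ι ≠ 0 := Complex.slitPlane_ne_zero hι'
  rw [← hι, ← Complex.log_ofReal_mul ha h0]
  have hs : (a : ℂ) * ι ∈ Complex.slitPlane := by
    rw [Complex.mem_slitPlane_iff] at hι' ⊢
    simp only [Complex.re_ofReal_mul, Complex.im_ofReal_mul]
    rcases hι' with h | h
    · left; positivity
    · right; exact mul_ne_zero ha.ne' h
  have h1 : Tendsto (fun ε : ℝ => (ε : ℂ) + a * ι) (nhdsWithin 0 (Set.Ioi 0)) (nhds (a * ι)) := by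
    have : Continuous (fun ε : ℝ => (ε : ℂ) + a * ι) := by fun_prop
    have := this.tendsto 0
    simp only [Complex.ofReal_zero, zero_add] at this
    exact this.mono_left nhdsWithin_le_nhds
  exact (continuousAt_clog hs).tendsto.comp h1

lemma KB_lim {ν : ℂ} (hν : ν.re = 0) (hν0 : ν ≠ 0) {y c : ℝ} (hy : 0 < y) (hc : 0 < c)
    {ι δ : ℂ} (hι : Complex.log ι = δ) (hι' : ι ∈ Complex.slitPlane) (hre : ι.re = 0)
    (hδ : Complex.exp (2 * δ) = -1) :
    Tendsto (fun ε : ℝ => KB ν ((ε + c * ι) * y) * Complex.sin (Real.pi * ν))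
      (nhdsWithin 0 (Set.Ioi 0))
      (nhds (Real.pi * (Complex.exp (-ν * δ) * besselJ (-ν) (y * c) -
        Complex.exp (ν * δ) * besselJ ν (y * c)))) := by
  have hm : Tendsto (fun ε : ℝ => ε * y / 2) (nhdsWithin 0 (Set.Ioi 0)) (nhdsWithin 0 (Set.Ioi 0)) := by
    refine tendsto_nhdsWithin_iff.2 ⟨?_, ?_⟩
    · have : Continuous (fun ε : ℝ => ε * y / 2) := by fun_prop
      have := this.tendsto 0
      simp only [zero_mul, zero_div] at this
      exact this.mono_left nhdsWithin_le_nhds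
    · filter_upwards [self_mem_nhdsWithin] with ε hε
      have : (0 : ℝ) < ε := hε
      show (0 : ℝ) < ε * y / 2
      positivity
  have h1 := (log_lim (a := y * c / 2) (by positivity) hι hι').comp hm
  have hν' : 0 ≤ (-ν).re := by simp [hν]
  have h2 := (((PhiB_hasDerivAt hν' _).continuousAt.tendsto.comp h1).sub
    ((PhiB_hasDerivAt hν.ge _).continuousAt.tendsto.comp h1)).const_mul (Real.pi : ℂ)
  rw [PhiB_J _ _ hδ, PhiB_J _ _ hδ] at h2
  refine h2.congr' ?_
  filter_upwards [self_mem_nhdsWithin] with ε hε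
  have hε' : (0 : ℝ) < ε := hε
  set w : ℂ := ((ε * y / 2 : ℝ) : ℂ) + ((y * c / 2 : ℝ) : ℂ) * ι with hw
  have hwre : 0 < w.re := by
    rw [hw, Complex.add_re, Complex.re_ofReal_mul, hre, mul_zero, add_zero, Complex.ofReal_re]
    positivity
  have hw0 : w ≠ 0 := by intro h; rw [h] at hwre; simp at hwre
  have hst : Complex.log w ∈ strip := by
    show |(Complex.log w).im| < Real.pi / 2
    rw [Complex.log_im, Complex.abs_arg_lt_pi_div_two_iff]
    exact Or.inl hwre
  have := KB_eq hν hν0 hst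
  rw [Complex.exp_log hw0] at this
  simp only [Function.comp_apply]
  rw [← this]
  congr 2
  rw [hw]; push_cast; ring

lemma kplus_lim {t : ℝ} (ht : t ≠ 0) {y c : ℝ} (hy : 0 < y) (hc : 0 < c) :
    Tendsto (fun ε : ℝ => (1 / (2 * Real.pi) : ℂ) *
      (KB (2 * (Complex.I * t)) ((ε + c * Complex.I) * y) +
        KB (2 * (Complex.I * t)) ((ε + c * (-Complex.I)) * y)))
      (nhdsWithin 0 (Set.Ioi 0)) (nhds (kplus (y * c) (1 / 2 + Complex.I * t))) := by
  set ν : ℂ := 2 * (Complex.I * t) with hνd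
  have hν : ν.re = 0 := by simp [hνd]
  have hν0 : ν ≠ 0 := by simp [hνd, ht]
  have hl : Complex.log (-Complex.I) = -(Real.pi / 2 * Complex.I) := by
    rw [Complex.log_neg_I]; ring
  have h1 := KB_lim hν hν0 hy hc Complex.log_I (by simp [Complex.mem_slitPlane_iff]) (by simp)
    exp_pi_I_half
  have h2 := KB_lim hν hν0 hy hc hl (by simp [Complex.mem_slitPlane_iff]) (by simp)
    exp_pi_I_half'
  have hpi : (Real.pi : ℂ) ≠ 0 := by exact_mod_cast Real.pi_ne_zero
  have hsh : Complex.sin (Real.pi / 2 * ν) ≠ 0 := by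
    rw [show (Real.pi : ℂ) / 2 * ν = ((Real.pi * t : ℝ) : ℂ) * Complex.I by
      rw [hνd]; push_cast; ring, Complex.sin_mul_I]
    refine mul_ne_zero ?_ Complex.I_ne_zero
    rw [← Complex.ofReal_sinh]
    norm_cast
    rw [Real.sinh_eq_zero.not]
    exact mul_ne_zero Real.pi_ne_zero ht
  have hch : Complex.cos (Real.pi / 2 * ν) ≠ 0 := by
    rw [show (Real.pi : ℂ) / 2 * ν = ((Real.pi * t : ℝ) : ℂ) * Complex.I by
      rw [hνd]; push_cast; ring, Complex.cos_mul_I]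
    rw [← Complex.ofReal_cosh]
    norm_cast
    exact (Real.cosh_pos _).ne'
  have hsin : Complex.sin (Real.pi * ν) = 2 * Complex.sin (Real.pi / 2 * ν) *
      Complex.cos (Real.pi / 2 * ν) := by
    rw [← Complex.sin_two_mul]; congr 1; ring
  have h3 := ((h1.add h2).mul_const (Complex.sin (Real.pi * ν))⁻¹).const_mul (1 / (2 * Real.pi) : ℂ)
  have hs0 : Complex.sin (Real.pi * ν) ≠ 0 := by
    rw [hsin]; exact mul_ne_zero (mul_ne_zero two_ne_zero hsh) hch
  have e : kplus (y * c) (1 / 2 + Complex.I * t) = (besselJ (-ν) (y * c) - besselJ ν (y * c)) /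
      (2 * Complex.sin (Real.pi / 2 * ν)) := by
    rw [kplus, show 2 * (1 / 2 + Complex.I * t) - 1 = ν by rw [hνd]; ring,
      show 1 - 2 * (1 / 2 + Complex.I * t) = -ν by rw [hνd]; ring,
      show (Real.pi : ℂ) * (1 / 2 + Complex.I * t) = Real.pi / 2 * ν + Real.pi / 2 by rw [hνd]; ring,
      Complex.cos_add_pi_div_two]
    rw [mul_neg, div_neg, ← neg_div]; ring
  rw [e]
  have hlim : (besselJ (-ν) (y * c) - besselJ ν (y * c)) / (2 * Complex.sin (Real.pi / 2 * ν)) =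
      (1 / (2 * Real.pi) : ℂ) * ((Real.pi * (Complex.exp (-ν * (Real.pi / 2 * Complex.I)) * besselJ (-ν) (y * c) -
        Complex.exp (ν * (Real.pi / 2 * Complex.I)) * besselJ ν (y * c)) +
        Real.pi * (Complex.exp (-ν * -(Real.pi / 2 * Complex.I)) * besselJ (-ν) (y * c) -
        Complex.exp (ν * -(Real.pi / 2 * Complex.I)) * besselJ ν (y * c))) *
        (Complex.sin (Real.pi * ν))⁻¹) := by
    have hcos : Complex.exp (ν * (Real.pi / 2 * Complex.I)) +
        Complex.exp (ν * -(Real.pi / 2 * Complex.I)) = 2 * Complex.cos (Real.pi / 2 * ν) := by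
      rw [Complex.two_cos]; congr 1 <;> congr 1 <;> ring
    rw [hsin, show -ν * (Real.pi / 2 * Complex.I) = ν * -(Real.pi / 2 * Complex.I) by ring,
      show -ν * -(Real.pi / 2 * Complex.I) = ν * (Real.pi / 2 * Complex.I) by ring]
    generalize Complex.exp (ν * (Real.pi / 2 * Complex.I)) = e1 at hcos ⊢
    generalize Complex.exp (ν * -(Real.pi / 2 * Complex.I)) = e2 at hcos ⊢
    generalize Complex.sin (Real.pi / 2 * ν) = s1 at hsh ⊢
    generalize Complex.cos (Real.pi / 2 * ν) = c1 at hch hcos ⊢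
    generalize besselJ (-ν) (y * c) = j1
    generalize besselJ ν (y * c) = j2
    have he1 : e1 = 2 * c1 - e2 := by linear_combination hcos
    subst he1
    field_simp
    ring
  rw [hlim]
  refine h3.congr fun ε => ?_
  field_simp

lemma one_div_cosh_integrable : Integrable (fun u : ℝ => 1 / Real.cosh u) := by
  refine (integrable_inv_one_add_sq.const_mul 4).mono' ?_ (ae_of_all _ fun u => ?_)
  · exact (continuous_const.div Real.continuous_cosh fun u => (Real.cosh_pos u).ne').aestronglyMeasurable
  · have h := Real.quadratic_le_exp_of_nonneg (abs_nonneg u)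
    have h2 : (1 + u ^ 2) / 4 ≤ Real.cosh u := by
      rw [← Real.cosh_abs, Real.cosh_eq]
      have h' := Real.exp_pos (-|u|)
      rw [sq_abs] at h
      have := abs_nonneg u
      linarith
    rw [Real.norm_of_nonneg (by have := Real.cosh_pos u; positivity)]
    rw [← div_eq_mul_inv, div_le_div_iff₀ (Real.cosh_pos u) (by positivity)]
    linarith

lemma KB_bound {ν : ℂ} (hν : ν.re = 0) :
    ∃ M : ℝ, 0 ≤ M ∧ ∀ x : ℂ, 0 < x.re → ‖KB ν x‖ ≤ M * (1 + 1 / ‖x‖) := by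
  set Q := ∫ u : ℝ, 1 / Real.cosh u with hQ
  have hQ0 : 0 ≤ Q := integral_nonneg fun u => by have := Real.cosh_pos u; positivity
  refine ⟨(‖ν‖ + 3) * Q, by positivity, fun x hx => ?_⟩
  have hx0 : 0 < ‖x‖ := norm_pos_iff.2 (by rintro rfl; simp at hx)
  set e : ℝ → ℂ := fun u => Complex.exp (-x * (Real.cosh u : ℂ) + ν * u) with he
  have hen : ∀ u, ‖e u‖ ≤ 1 := by
    intro u
    rw [he]; simp only []
    rw [norm_kern, hν]
    apply Real.exp_le_one_iff.2
    nlinarith [mul_pos hx (Real.cosh_pos u)]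
  have hei : Integrable e := integrable_kern hx ν
  set g : ℝ → ℝ := fun u => Real.sinh u / Real.cosh u ^ 2 with hg
  set R : ℝ → ℂ := fun u => ν * (g u : ℂ) + ((1 / Real.cosh u - 2 * Real.sinh u ^ 2 / Real.cosh u ^ 3 : ℝ) : ℂ) with hR
  have hcc : Continuous fun u => Real.cosh u := Real.continuous_cosh
  have hcs : Continuous fun u => Real.sinh u := Real.continuous_sinh
  have hc0 : ∀ u, Real.cosh u ≠ 0 := fun u => (Real.cosh_pos u).ne'
  have hgc : Continuous g := hcs.div (hcc.pow 2) fun u => pow_ne_zero _ (hc0 u)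
  have hRc : Continuous R := by
    refine (continuous_const.mul (Complex.continuous_ofReal.comp hgc)).add
      (Complex.continuous_ofReal.comp ((continuous_const.div hcc hc0).sub
        ((continuous_const.mul (hcs.pow 2)).div (hcc.pow 3) fun u => pow_ne_zero _ (hc0 u))))
  have hec : Continuous e := by fun_prop
  have hsle : ∀ u, |Real.sinh u| ≤ Real.cosh u := fun u =>
    abs_le_of_sq_le_sq (by have := Real.cosh_sq u; linarith) (Real.cosh_pos u).le
  have hgle : ∀ u, |g u| ≤ 1 / Real.cosh u := by
    intro u
    have h := Real.cosh_pos u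
    rw [hg]; simp only []
    rw [abs_div, abs_of_pos (pow_pos h 2), div_le_div_iff₀ (by positivity) h]
    nlinarith [hsle u]
  have hRle : ∀ u, ‖R u‖ ≤ (‖ν‖ + 2) * (1 / Real.cosh u) := by
    intro u
    have h := Real.cosh_pos u
    refine (norm_add_le _ _).trans ?_
    rw [norm_mul, Complex.norm_real, Complex.norm_real, Real.norm_eq_abs, Real.norm_eq_abs]
    have h2 : |1 / Real.cosh u - 2 * Real.sinh u ^ 2 / Real.cosh u ^ 3| ≤ 2 * (1 / Real.cosh u) := by
      have h3 : 2 * Real.sinh u ^ 2 / Real.cosh u ^ 3 ≤ 2 * (1 / Real.cosh u) := by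
        rw [mul_one_div, div_le_div_iff₀ (by positivity) h]
        have := Real.cosh_sq u
        nlinarith [pow_pos h 2]
      have h4 : 0 ≤ 2 * Real.sinh u ^ 2 / Real.cosh u ^ 3 := by positivity
      have h5 : 0 ≤ 1 / Real.cosh u := by positivity
      rw [abs_le]; constructor <;> linarith
    nlinarith [mul_le_mul_of_nonneg_left (hgle u) (norm_nonneg ν)]
  have hI1 : Integrable (fun u => e u * R u) := by
    refine (one_div_cosh_integrable.const_mul (‖ν‖ + 2)).mono' (by fun_prop) (ae_of_all _ fun u => ?_)
    rw [norm_mul]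
    exact (mul_le_of_le_one_left (norm_nonneg _) (hen u)).trans (hRle u)
  have hI2 : Integrable (fun u => e u * ((1 / Real.cosh u ^ 2 : ℝ) : ℂ)) := by
    refine one_div_cosh_integrable.mono' ?_ (ae_of_all _ fun u => ?_)
    · exact (hec.mul (Complex.continuous_ofReal.comp (continuous_const.div (hcc.pow 2)
        fun u => pow_ne_zero _ (hc0 u)))).aestronglyMeasurable
    · rw [norm_mul]
      refine (mul_le_of_le_one_left (norm_nonneg _) (hen u)).trans ?_
      have h := Real.cosh_pos u
      rw [Complex.norm_real, Real.norm_of_nonneg (by positivity), div_le_div_iff₀ (by positivity) h]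
      nlinarith [Real.one_le_cosh u]
  have hI3 : Integrable (fun u => e u * (g u : ℂ)) := by
    refine one_div_cosh_integrable.mono' ?_ (ae_of_all _ fun u => ?_)
    · exact (hec.mul (Complex.continuous_ofReal.comp hgc)).aestronglyMeasurable
    · rw [norm_mul]
      refine (mul_le_of_le_one_left (norm_nonneg _) (hen u)).trans ?_
      rw [Complex.norm_real, Real.norm_eq_abs]
      exact hgle u
  have hd : ∀ u : ℝ, HasDerivAt (fun u => e u * (g u : ℂ))
      (-x * (e u - e u * ((1 / Real.cosh u ^ 2 : ℝ) : ℂ)) + e u * R u) u := by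
    intro u
    have h1 : HasDerivAt (fun u : ℝ => (Real.cosh u : ℂ)) (Real.sinh u : ℂ) u :=
      (Real.hasDerivAt_cosh u).ofReal_comp
    have h2 : HasDerivAt (fun u : ℝ => (u : ℂ)) 1 u := Complex.ofRealCLM.hasDerivAt
    have h3 := ((h1.const_mul (-x)).add (h2.const_mul ν)).cexp
    have h4 : HasDerivAt g (1 / Real.cosh u - 2 * Real.sinh u ^ 2 / Real.cosh u ^ 3) u := by
      refine ((Real.hasDerivAt_sinh u).div ((Real.hasDerivAt_cosh u).pow 2)
        (pow_ne_zero _ (hc0 u))).congr_deriv ?_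
      have := hc0 u
      simp only [Pi.pow_apply]
      field_simp
      push_cast
      ring
    refine (h3.mul h4.ofReal_comp).congr_deriv ?_
    have hcn : (Real.cosh u : ℂ) ≠ 0 := by exact_mod_cast hc0 u
    have hsq : (Real.cosh u : ℂ) ^ 2 = (Real.sinh u : ℂ) ^ 2 + 1 := by
      exact_mod_cast Real.cosh_sq u
    have hk : (Real.sinh u : ℂ) * (g u : ℂ) = 1 - ((1 / Real.cosh u ^ 2 : ℝ) : ℂ) := by
      rw [hg]; push_cast at hsq hcn ⊢; field_simp; linear_combination (-1) * hsq
    simp only [hR, Pi.add_apply]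
    change e u * _ * _ + e u * _ = _
    linear_combination (-x) * e u * hk
  have hz := integral_eq_zero_of_hasDerivAt_of_integrable hd
    (((hei.sub hI2).const_mul (-x)).add hI1) hI3
  erw [integral_add ((hei.sub hI2).const_mul (-x)) hI1] at hz
  rw [integral_const_mul] at hz
  erw [integral_sub hei hI2] at hz
  have hn1 : ‖∫ u, e u * R u‖ ≤ (‖ν‖ + 2) * Q := by
    rw [hQ, ← integral_const_mul]
    refine norm_integral_le_of_norm_le (one_div_cosh_integrable.const_mul (‖ν‖ + 2))
      (ae_of_all _ fun u => ?_)
    rw [norm_mul]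
    exact (mul_le_of_le_one_left (norm_nonneg _) (hen u)).trans (hRle u)
  have hn2 : ‖∫ u, e u * ((1 / Real.cosh u ^ 2 : ℝ) : ℂ)‖ ≤ Q := by
    refine norm_integral_le_of_norm_le one_div_cosh_integrable (ae_of_all _ fun u => ?_)
    rw [norm_mul]
    refine (mul_le_of_le_one_left (norm_nonneg _) (hen u)).trans ?_
    have h := Real.cosh_pos u
    rw [Complex.norm_real, Real.norm_of_nonneg (by positivity), div_le_div_iff₀ (by positivity) h]
    nlinarith [Real.one_le_cosh u]
  have hxn : x ≠ 0 := norm_pos_iff.1 hx0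
  have hK : KB ν x = (∫ u, e u * ((1 / Real.cosh u ^ 2 : ℝ) : ℂ)) + (∫ u, e u * R u) / x := by
    change (∫ u, e u) = _
    field_simp
    linear_combination (-1) * hz
  rw [hK]
  refine (norm_add_le _ _).trans ?_
  rw [norm_div]
  have h6 : ‖∫ u, e u * R u‖ / ‖x‖ ≤ (‖ν‖ + 2) * Q / ‖x‖ := by gcongr
  have h7 : (‖ν‖ + 3) * Q * (1 + 1 / ‖x‖) = Q + (‖ν‖ + 2) * Q / ‖x‖ + ((‖ν‖ + 2) * Q + Q / ‖x‖) := by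
    field_simp; ring
  have h8 : 0 ≤ (‖ν‖ + 2) * Q + Q / ‖x‖ := by positivity
  linarith


open Complex in
lemma int_exp_ite (N : ℤ) : (∫ θ in (0:ℝ)..2 * Real.pi, Complex.exp (N * (θ * Complex.I))) =
    if N = 0 then 2 * (Real.pi : ℂ) else 0 := by
  split_ifs with h
  · subst h; simp
  · have h1 : ∀ θ : ℝ, Complex.exp (N * (θ * Complex.I)) = Complex.exp ((N * Complex.I) * θ) := by
      intro θ; congr 1; ring
    simp only [h1]
    have hN : (N : ℂ) * Complex.I ≠ 0 := mul_ne_zero (by exact_mod_cast h) Complex.I_ne_zero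
    rw [integral_exp_mul_complex hN]
    have : Complex.exp ((N * Complex.I) * ((2 * Real.pi : ℝ) : ℂ)) = 1 := by
      rw [Complex.exp_eq_one_iff]
      exact ⟨N, by push_cast; ring⟩
    rw [this]; simp

lemma int_inner (a : ℂ) (m : ℕ) : (∫ θ in (0:ℝ)..2 * Real.pi,
    Complex.exp (m * (θ * Complex.I)) * Complex.exp (a * Complex.exp (-(θ * Complex.I)))) =
      2 * Real.pi * (a ^ m / m.factorial) := by
  have key : HasSum (fun j : ℕ => ∫ θ in (0:ℝ)..2 * Real.pi,
      Complex.exp (m * (θ * Complex.I)) * ((a * Complex.exp (-(θ * Complex.I))) ^ j / j.factorial))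
      (∫ θ in (0:ℝ)..2 * Real.pi,
    Complex.exp (m * (θ * Complex.I)) * Complex.exp (a * Complex.exp (-(θ * Complex.I)))) := by
    refine intervalIntegral.hasSum_integral_of_dominated_convergence
      (fun j _ => ‖a‖ ^ j / j.factorial) (fun j => ?_) (fun j => ?_) ?_ ?_ ?_
    · exact (by fun_prop : Continuous _).aestronglyMeasurable
    · refine ae_of_all _ fun θ _ => ?_
      rw [norm_mul, norm_div, norm_pow, norm_mul, Complex.norm_natCast]
      have e1 : ‖Complex.exp (m * (θ * Complex.I))‖ = 1 := by
        rw [Complex.norm_exp]; simp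
      have e2 : ‖Complex.exp (-(θ * Complex.I))‖ = 1 := by
        rw [Complex.norm_exp]; simp
      rw [e1, e2, mul_one, one_mul]
    · exact ae_of_all _ fun θ _ => Real.summable_pow_div_factorial _
    · exact intervalIntegrable_const
    · refine ae_of_all _ fun θ _ => ?_
      refine HasSum.mul_left _ ?_
      rw [Complex.exp_eq_exp_ℂ]
      exact NormedSpace.expSeries_div_hasSum_exp _
  have h2 : ∀ j : ℕ, (∫ θ in (0:ℝ)..2 * Real.pi,
      Complex.exp (m * (θ * Complex.I)) * ((a * Complex.exp (-(θ * Complex.I))) ^ j / j.factorial)) =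
      if j = m then 2 * Real.pi * (a ^ m / m.factorial) else 0 := by
    intro j
    have : ∀ θ : ℝ, Complex.exp (m * (θ * Complex.I)) * ((a * Complex.exp (-(θ * Complex.I))) ^ j / j.factorial)
        = (a ^ j / j.factorial) * Complex.exp (((m - j : ℤ) : ℂ) * (θ * Complex.I)) := by
      intro θ
      rw [mul_pow, ← Complex.exp_nat_mul]
      have : Complex.exp (((m - j : ℤ) : ℂ) * (θ * Complex.I)) =
        Complex.exp (m * (θ * Complex.I)) * Complex.exp (j * -(θ * Complex.I)) := by
        rw [← Complex.exp_add]; congr 1; push_cast; ring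
      rw [this]; ring
    simp only [this]
    rw [intervalIntegral.integral_const_mul, int_exp_ite]
    by_cases h : j = m
    · subst h; simp; ring
    · rw [if_neg (by omega), if_neg h, mul_zero]
  simp only [h2] at key
  exact key.unique (hasSum_ite_eq m _)

/-- Bessel integral for `J_n`. -/
noncomputable def JI (n : ℕ) (y : ℝ) : ℂ := (1 / (2 * Real.pi) : ℂ) * ∫ θ in (0:ℝ)..2 * Real.pi,
  Complex.exp (n * (θ * Complex.I)) * Complex.exp (-(y * Real.sin θ : ℝ) * Complex.I)

lemma besselJ_int {k : ℕ} (hk : 1 ≤ k) {y : ℝ} (hy : 0 < y) :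
    besselJ (2 * (k : ℂ) - 1) y = JI (2 * k - 1) y := by
  set n := 2 * k - 1 with hn
  have hnc : (2 * (k : ℂ) - 1) = (n : ℂ) := by
    rw [hn, Nat.cast_sub (by omega)]; push_cast; ring
  have hpi : (Real.pi : ℂ) ≠ 0 := by exact_mod_cast Real.pi_ne_zero
  have key : HasSum (fun j : ℕ => ∫ θ in (0:ℝ)..2 * Real.pi,
      ((-(y / 2 : ℂ)) ^ j / j.factorial) * (Complex.exp (((n + j : ℕ) : ℂ) * (θ * Complex.I)) *
        Complex.exp ((y / 2 : ℂ) * Complex.exp (-(θ * Complex.I)))))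
      (∫ θ in (0:ℝ)..2 * Real.pi,
        Complex.exp (n * (θ * Complex.I)) * Complex.exp (-(y * Real.sin θ : ℝ) * Complex.I)) := by
    refine intervalIntegral.hasSum_integral_of_dominated_convergence
      (fun j _ => ‖(y / 2 : ℂ)‖ ^ j / j.factorial * Real.exp (y / 2)) (fun j => ?_) (fun j => ?_) ?_ ?_ ?_
    · exact (by fun_prop : Continuous _).aestronglyMeasurable
    · refine ae_of_all _ fun θ _ => ?_
      rw [norm_mul, norm_mul, norm_div, norm_pow, norm_neg, Complex.norm_natCast]
      have e1 : ‖Complex.exp (((n + j : ℕ) : ℂ) * (θ * Complex.I))‖ = 1 := by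
        rw [Complex.norm_exp]; simp
      have e2 : ‖Complex.exp (-(θ * Complex.I))‖ = 1 := by
        rw [Complex.norm_exp]; simp
      rw [e1, one_mul]
      gcongr
      rw [Complex.norm_exp, Real.exp_le_exp]
      refine (Complex.re_le_norm _).trans ?_
      rw [norm_mul, e2, mul_one, norm_div, Complex.norm_real, Real.norm_of_nonneg hy.le]
      simp
    · exact ae_of_all _ fun θ _ => (Real.summable_pow_div_factorial _).mul_right _
    · exact intervalIntegrable_const
    · refine ae_of_all _ fun θ _ => ?_
      have h1 : HasSum (fun j : ℕ => (-(y / 2 : ℂ) * Complex.exp (θ * Complex.I)) ^ j / j.factorial)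
          (Complex.exp (-(y / 2 : ℂ) * Complex.exp (θ * Complex.I))) := by
        rw [Complex.exp_eq_exp_ℂ]
        exact NormedSpace.expSeries_div_hasSum_exp _
      have h2 := h1.mul_right (Complex.exp (n * (θ * Complex.I)) *
        Complex.exp ((y / 2 : ℂ) * Complex.exp (-(θ * Complex.I))))
      have e3 : Complex.exp (-(y / 2 : ℂ) * Complex.exp (θ * Complex.I)) * (Complex.exp (n * (θ * Complex.I)) *
        Complex.exp ((y / 2 : ℂ) * Complex.exp (-(θ * Complex.I)))) =
        Complex.exp (n * (θ * Complex.I)) * Complex.exp (-(y * Real.sin θ : ℝ) * Complex.I) := by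
        rw [← Complex.exp_add, ← Complex.exp_add, ← Complex.exp_add]
        congr 1
        push_cast
        rw [Complex.sin, show -(θ * Complex.I) = -θ * Complex.I by ring]
        linear_combination (y / 2 : ℂ) * (Complex.exp (-θ * Complex.I) - Complex.exp (θ * Complex.I)) * Complex.I_sq
      rw [e3] at h2
      refine Eq.mp (congrArg (fun f : ℕ → ℂ => HasSum f _) (funext fun j => ?_)) h2
      symm
      rw [mul_pow, ← Complex.exp_nat_mul, show (((n + j : ℕ) : ℂ) * (θ * Complex.I)) = j * (θ * Complex.I) + n * (θ * Complex.I) by push_cast; ring,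
        Complex.exp_add]
      ring
  simp only [intervalIntegral.integral_const_mul, int_inner] at key
  rw [JI, ← key.tsum_eq, besselJ, ← tsum_mul_left]
  congr 1; ext j
  rw [hnc, Complex.Gamma_nat_eq_factorial, show (j : ℂ) + 1 + n = ((n + j : ℕ) : ℂ) + 1 by push_cast; ring,
    Complex.Gamma_nat_eq_factorial]
  have e4 : Complex.exp ((n + 2 * j) * (Real.log (y / 2) : ℂ)) = (y / 2 : ℂ) ^ (n + 2 * j) := by
    rw [show ((n : ℂ) + 2 * j) = ((n + 2 * j : ℕ) : ℂ) by push_cast; ring, Complex.exp_nat_mul,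
      ← Complex.ofReal_exp, Real.exp_log (by positivity)]
    push_cast; rfl
  rw [e4, neg_pow (y / 2 : ℂ)]
  have f1 : (j.factorial : ℂ) ≠ 0 := by exact_mod_cast j.factorial_ne_zero
  have f2 : ((n + j).factorial : ℂ) ≠ 0 := by exact_mod_cast (n + j).factorial_ne_zero
  generalize (y / 2 : ℂ) = w
  field_simp
  ring

lemma norm_expI (n : ℕ) (θ : ℝ) : ‖Complex.exp (n * (θ * Complex.I))‖ = 1 := by
  rw [Complex.norm_exp]; simp

lemma JI_le_one (n : ℕ) (y : ℝ) : ‖JI n y‖ ≤ 1 := by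
  have h := intervalIntegral.norm_integral_le_of_norm_le_const (a := 0) (b := 2 * Real.pi) (C := 1)
    (f := fun θ : ℝ => Complex.exp (n * (θ * Complex.I)) * Complex.exp (-(y * Real.sin θ : ℝ) * Complex.I))
    (fun θ _ => by
      rw [norm_mul, norm_expI, one_mul, Complex.norm_exp]; simp)
  rw [JI, norm_mul]
  have hp := Real.pi_pos
  have e : ‖(1 / (2 * Real.pi) : ℂ)‖ = 1 / (2 * Real.pi) := by
    rw [norm_div, norm_mul, Complex.norm_real, Real.norm_of_nonneg hp.le]; simp
  rw [e, sub_zero, one_mul, abs_of_pos (by positivity)] at *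
  rw [one_div, inv_mul_le_iff₀ (by positivity)]
  linarith

lemma JI_le_self {n : ℕ} (hn : 1 ≤ n) {y : ℝ} (hy : 0 < y) : ‖JI n y‖ ≤ y := by
  have h := intervalIntegral.norm_integral_le_of_norm_le_const (a := 0) (b := 2 * Real.pi) (C := y)
    (f := fun θ : ℝ => Complex.exp (n * (θ * Complex.I)) * (Complex.exp (-(y * Real.sin θ : ℝ) * Complex.I) - 1))
    (fun θ _ => by
      rw [norm_mul, norm_expI, one_mul]
      rw [show (-(y * Real.sin θ : ℝ) * Complex.I : ℂ) = Complex.I * ((-(y * Real.sin θ) : ℝ) : ℂ) by push_cast; ring]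
      refine (Real.norm_exp_I_mul_ofReal_sub_one_le).trans ?_
      rw [Real.norm_eq_abs, abs_neg, abs_mul, abs_of_pos hy]
      exact mul_le_of_le_one_right hy.le (Real.abs_sin_le_one θ))
  have e0 : (∫ θ in (0:ℝ)..2 * Real.pi, Complex.exp (n * (θ * Complex.I)) * Complex.exp (-(y * Real.sin θ : ℝ) * Complex.I)) =
     ∫ θ in (0:ℝ)..2 * Real.pi, Complex.exp (n * (θ * Complex.I)) * (Complex.exp (-(y * Real.sin θ : ℝ) * Complex.I) - 1) := by
    simp only [mul_sub, mul_one]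
    rw [intervalIntegral.integral_sub ((by fun_prop : Continuous _).intervalIntegrable _ _)
      ((by fun_prop : Continuous _).intervalIntegrable _ _)]
    have := int_exp_ite n
    rw [if_neg (by omega)] at this
    push_cast at this ⊢
    rw [this, sub_zero]
  rw [JI, norm_mul, e0]
  have hp := Real.pi_pos
  have e : ‖(1 / (2 * Real.pi) : ℂ)‖ = 1 / (2 * Real.pi) := by
    rw [norm_div, norm_mul, Complex.norm_real, Real.norm_of_nonneg hp.le]; simp
  rw [sub_zero, abs_of_pos (by positivity)] at h
  rw [e, one_div, inv_mul_le_iff₀ (by positivity)]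
  linarith

lemma JI_continuous (n : ℕ) : Continuous (JI n) := by
  unfold JI
  refine continuous_const.mul ?_
  apply intervalIntegral.continuous_parametric_intervalIntegral_of_continuous'
  fun_prop


/-- Laplace transform of `J_n`. -/
noncomputable def FB (n : ℕ) (p : ℂ) : ℂ := (1 / (2 * Real.pi) : ℂ) * ∫ θ in (0:ℝ)..2 * Real.pi,
  Complex.exp (n * (θ * Complex.I)) / (p + Complex.I * Real.sin θ)

lemma laplace_JI (n : ℕ) {p : ℂ} (hp : 0 < p.re) :
    (∫ y in Set.Ioi (0:ℝ), Complex.exp (-p * y) * JI n y) = FB n p := by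
  have hpi : (0:ℝ) ≤ 2 * Real.pi := by have := Real.pi_pos; positivity
  unfold JI FB
  have e1 : ∀ y : ℝ, Complex.exp (-p * y) * ((1 / (2 * Real.pi) : ℂ) * ∫ θ in (0:ℝ)..2 * Real.pi,
      Complex.exp (n * (θ * Complex.I)) * Complex.exp (-(y * Real.sin θ : ℝ) * Complex.I)) =
      (1 / (2 * Real.pi) : ℂ) * ∫ θ in Set.Ioc (0:ℝ) (2 * Real.pi),
       Complex.exp (n * (θ * Complex.I)) * Complex.exp ((-(p + Complex.I * Real.sin θ)) * y) := by
    intro y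
    rw [mul_left_comm, ← intervalIntegral.integral_const_mul, intervalIntegral.integral_of_le hpi]
    congr 2; ext θ
    rw [mul_left_comm, ← Complex.exp_add]
    congr 2; push_cast; ring
  simp only [e1]
  rw [integral_const_mul, integral_integral_swap, intervalIntegral.integral_of_le hpi]
  · congr 2; ext θ
    rw [integral_const_mul, integral_exp_mul_complex_Ioi (by simpa using hp)]
    rw [Complex.ofReal_zero, mul_zero, Complex.exp_zero, neg_div_neg_eq, mul_one_div]
  · have h1 : Integrable (fun y : ℝ => Real.exp (-p.re * y)) (volume.restrict (Set.Ioi 0)) :=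
      integrableOn_exp_mul_Ioi (by linarith) 0
    have h2 : Integrable (fun _ : ℝ => (1:ℝ)) (volume.restrict (Set.Ioc 0 (2 * Real.pi))) := by
      exact integrable_const _
    refine (h1.mul_prod h2).mono' ?_ (ae_of_all _ ?_)
    · apply Continuous.aestronglyMeasurable
      unfold Function.uncurry
      fun_prop
    · rintro ⟨y, θ⟩
      simp only [Function.uncurry, norm_mul, norm_expI, one_mul, mul_one]
      rw [Complex.norm_exp]
      simp

lemma exists_q {p : ℂ} (hp : 0 < p.re) : ∃ q : ℂ, q ≠ 0 ∧ ‖q‖ < 1 ∧ 2 * p = 1 / q - q := by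
  have aux : ∀ q : ℂ, q * (q + 2 * p) = 1 → q ≠ 0 ∧ ‖q‖ ≠ 1 ∧ 2 * p = 1 / q - q := by
    intro q hq
    have h0 : q ≠ 0 := by rintro rfl; simp at hq
    have h2 : 2 * p = 1 / q - q := by field_simp; linear_combination hq
    refine ⟨h0, fun h => ?_, h2⟩
    have h3 : q⁻¹ = (starRingEnd ℂ) q := by
      rw [Complex.inv_def, Complex.normSq_eq_norm_sq, h]; simp
    rw [one_div, h3] at h2
    have := congrArg Complex.re h2
    simp at this
    linarith
  obtain ⟨s, hs⟩ := IsAlgClosed.exists_pow_nat_eq (p ^ 2 + 1) (n := 2) (by norm_num)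
  obtain ⟨a1, a2, a3⟩ := aux (-p + s) (by linear_combination hs)
  obtain ⟨b1, b2, b3⟩ := aux (-p - s) (by linear_combination hs)
  have hprod : ‖-p + s‖ * ‖-p - s‖ = 1 := by
    rw [← norm_mul, show (-p + s) * (-p - s) = -1 by linear_combination (-1) * hs]; simp
  rcases lt_or_gt_of_ne a2 with h | h
  · exact ⟨_, a1, h, a3⟩
  · refine ⟨_, b1, ?_, b3⟩
    by_contra h'
    push Not at h'
    nlinarith

lemma FB_eq {n : ℕ} {p q : ℂ} (hq0 : q ≠ 0) (hq : ‖q‖ < 1) (hp : 0 < p.re) (hpq : 2 * p = 1 / q - q) :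
    FB n p = 2 * q ^ n / (q + 1 / q) := by
  set f : ℂ → ℂ := fun ζ => 2 * ζ ^ n / (ζ + 1 / q) with hf
  have hne : ∀ ζ : ℂ, ‖ζ‖ ≤ 1 → ζ + 1 / q ≠ 0 := by
    intro ζ hζ h
    have h1 : ζ * q = -1 := by
      have : ζ = -(1 / q) := by linear_combination h
      rw [this]; field_simp
    have h2 : ‖ζ‖ * ‖q‖ = 1 := by rw [← norm_mul, h1]; simp
    nlinarith [norm_nonneg ζ, norm_nonneg q]
  have hd : DiffContOnCl ℂ f (Metric.ball 0 1) := by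
    apply DifferentiableOn.diffContOnCl
    rw [closure_ball _ one_ne_zero]
    intro ζ hζ
    have hζ' : ‖ζ‖ ≤ 1 := by simpa using hζ
    have := hne ζ hζ'
    apply DifferentiableAt.differentiableWithinAt
    rw [hf]
    fun_prop (disch := assumption)
  have hc := hd.circleIntegral_sub_inv_smul (w := q) (by simpa using hq)
  rw [circleIntegral] at hc
  have e : ∀ θ : ℝ, deriv (circleMap 0 1) θ • (circleMap 0 1 θ - q)⁻¹ • f (circleMap 0 1 θ) =
      Complex.I * (Complex.exp (n * (θ * Complex.I)) / (p + Complex.I * Real.sin θ)) := by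
    intro θ
    rw [deriv_circleMap, Complex.exp_nat_mul]
    have hcm : circleMap 0 1 θ = Complex.exp (θ * Complex.I) := by simp [circleMap]
    rw [hcm]
    have hi : Complex.I * Real.sin θ = (Complex.exp (θ * Complex.I) - (Complex.exp (θ * Complex.I))⁻¹) / 2 := by
      rw [← Complex.exp_neg, Complex.ofReal_sin, Complex.sin, show -(θ * Complex.I) = -θ * Complex.I by ring]
      linear_combination ((Complex.exp (-θ * Complex.I) - Complex.exp (θ * Complex.I)) / 2) * Complex.I_sq
    have hD : p + Complex.I * Real.sin θ ≠ 0 := by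
      intro h
      have := congrArg Complex.re h
      simp at this
      linarith
    have hz : ‖Complex.exp (θ * Complex.I)‖ = 1 := by rw [Complex.norm_exp]; simp
    rw [hi] at hD ⊢
    have hz0 := Complex.exp_ne_zero (θ * Complex.I)
    have hn1 := hne _ hz.le
    have hn2 : Complex.exp (θ * Complex.I) - q ≠ 0 := by
      intro h
      rw [sub_eq_zero.1 h] at hz; linarith
    simp only [hf, smul_eq_mul]
    generalize Complex.exp (θ * Complex.I) = ζ at *
    have h2 : ζ * (2 * (p + (ζ - ζ⁻¹) / 2)) = (ζ - q) * (ζ + 1 / q) := by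
      have : ζ * (2 * (p + (ζ - ζ⁻¹) / 2)) = ζ * (2 * p) + ζ ^ 2 - 1 := by field_simp; ring
      rw [this, hpq]; field_simp; ring
    rw [inv_mul_eq_div, div_div, mul_comm (ζ + 1 / q), ← h2]
    generalize (p + (ζ - ζ⁻¹) / 2) = D at *
    field_simp
  simp only [e] at hc
  rw [intervalIntegral.integral_const_mul] at hc
  have hpi : (Real.pi : ℂ) ≠ 0 := by exact_mod_cast Real.pi_ne_zero
  rw [FB]
  have hc' : (∫ θ in (0:ℝ)..2 * Real.pi,
    Complex.exp (n * (θ * Complex.I)) / (p + Complex.I * Real.sin θ)) = 2 * Real.pi * f q := by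
    apply mul_left_cancel₀ Complex.I_ne_zero
    rw [hc, smul_eq_mul]; ring
  rw [hc']
  change _ = f q
  field_simp

lemma FB_norm {n : ℕ} {p : ℂ} (hp : 0 < p.re) : ∃ r : ℝ, 0 < r ∧ r < 1 ∧ 2 * |p.im| ≤ r + 1 / r ∧
    ‖FB n p‖ = r ^ n / Real.sqrt ‖p ^ 2 + 1‖ := by
  obtain ⟨q, h0, h1, h2⟩ := exists_q hp
  refine ⟨‖q‖, norm_pos_iff.2 h0, h1, ?_, ?_⟩
  · have h3 : |(2 * p).im| ≤ ‖q‖ + 1 / ‖q‖ := by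
      refine (Complex.abs_im_le_norm _).trans ?_
      rw [h2]
      refine (norm_sub_le _ _).trans ?_
      rw [norm_div, norm_one]; linarith
    simpa [abs_mul] using h3
  · rw [FB_eq h0 h1 hp h2, norm_div, norm_mul, norm_pow]
    have h4 : (q + 1 / q) ^ 2 = 4 * (p ^ 2 + 1) := by
      have h5 : (2 * p) ^ 2 = (1 / q - q) ^ 2 := by rw [h2]
      have h6 : q * (1 / q) = 1 := by field_simp
      linear_combination (-1) * h5 + 4 * h6
    have h7 : ‖q + 1 / q‖ = 2 * Real.sqrt ‖p ^ 2 + 1‖ := by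
      rw [← Real.sqrt_sq (norm_nonneg (q + 1 / q)), ← norm_pow, h4, norm_mul,
        Real.sqrt_mul (norm_nonneg _)]
      congr 1
      rw [show ‖(4 : ℂ)‖ = 2 ^ 2 by norm_num, Real.sqrt_sq (by norm_num)]
    rw [h7]
    simp only [Complex.norm_ofNat]
    rw [mul_div_mul_left _ _ two_ne_zero]

lemma norm_psq {p : ℂ} : |p.im ^ 2 - 1| ≤ ‖p ^ 2 + 1‖ := by
  apply abs_le_of_sq_le_sq _ (norm_nonneg _)
  rw [← Complex.normSq_eq_norm_sq, Complex.normSq_apply]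
  simp [sq]
  nlinarith [sq_nonneg (p.re), sq_nonneg (p.re * p.im), sq_nonneg (p.re ^ 2)]

lemma FB_bound_lt {n : ℕ} {p : ℂ} (hp : 0 < p.re) {a : ℝ} (ha : |p.im| = a) (ha1 : a < 1) :
    ‖FB n p‖ ≤ 1 / Real.sqrt (1 - a ^ 2) := by
  obtain ⟨r, h0, h1, h2, h3⟩ := FB_norm (n := n) hp
  have h4 := norm_psq (p := p)
  have ha0 : 0 ≤ a := ha ▸ abs_nonneg _
  rw [← sq_abs, ha, abs_of_nonpos (by nlinarith)] at h4
  have h5 : 0 < 1 - a ^ 2 := by nlinarith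
  rw [h3]
  gcongr
  · exact pow_le_one₀ h0.le h1.le
  · linarith

lemma FB_bound_gt {n : ℕ} {p : ℂ} (hp : 0 < p.re) {a : ℝ} (ha : |p.im| = a) (ha1 : 1 < a) :
    ‖FB n p‖ ≤ (a - Real.sqrt (a ^ 2 - 1)) ^ n / Real.sqrt (a ^ 2 - 1) := by
  obtain ⟨r, h0, h1, h2, h3⟩ := FB_norm (n := n) hp
  have h4 := norm_psq (p := p)
  rw [← sq_abs, ha, abs_of_nonneg (by nlinarith)] at h4
  have h5 : 0 < a ^ 2 - 1 := by nlinarith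
  rw [h3]
  have h6 : r ≤ a - Real.sqrt (a ^ 2 - 1) := by
    rw [ha] at h2
    have h7 : 2 * a * r ≤ r ^ 2 + 1 := by
      have := mul_le_mul_of_nonneg_right h2 h0.le
      rw [add_mul, one_div, inv_mul_cancel₀ h0.ne'] at this
      linarith
    have h8 : Real.sqrt (a ^ 2 - 1) ≤ a - r := by
      apply Real.sqrt_le_iff.2
      constructor <;> nlinarith
    linarith
  have h9 : 0 ≤ (a - Real.sqrt (a ^ 2 - 1)) ^ n := pow_nonneg (h0.le.trans h6) n
  gcongr


lemma fubini_KB {ν ω : ℂ} (hν : ν.re = 0) (n : ℕ) {b : ℝ} (hb : 0 < b) (hω : 0 < ω.re) :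
    (∫ y in Set.Ioi (0:ℝ), Complex.exp (-(b * y)) * JI n y * KB ν (ω * y)) =
      ∫ u : ℝ, Complex.exp (ν * u) * FB n (b + ω * Real.cosh u) := by
  have e1 : ∀ y : ℝ, Complex.exp (-(b * y)) * JI n y * KB ν (ω * y) = ∫ u : ℝ,
      Complex.exp (ν * u) * (Complex.exp (-(b + ω * Real.cosh u) * y) * JI n y) := by
    intro y
    rw [KB, ← integral_const_mul]
    congr 1; ext u
    rw [show -(b + ω * Real.cosh u) * (y : ℂ) = -(b * y) + (-(ω * y) * (Real.cosh u : ℂ)) by ring,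
      Complex.exp_add, Complex.exp_add]
    ring
  simp only [e1]
  rw [integral_integral_swap]
  · congr 1; ext u
    rw [integral_const_mul, laplace_JI]
    rw [Complex.add_re, Complex.re_mul_ofReal, Complex.ofReal_re]
    have := Real.cosh_pos u
    positivity
  · have hmeas : AEStronglyMeasurable (Function.uncurry fun (y u : ℝ) =>
        Complex.exp (ν * u) * (Complex.exp (-(b + ω * Real.cosh u) * y) * JI n y))
        ((volume.restrict (Set.Ioi (0:ℝ))).prod volume) := by
      apply Continuous.aestronglyMeasurable
      unfold Function.uncurry
      have := JI_continuous n
      fun_prop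
    have hmeas2 : AEStronglyMeasurable (fun z : ℝ × ℝ => Real.exp (-(b + ω.re * Real.cosh z.2) * z.1))
        ((volume.restrict (Set.Ioi (0:ℝ))).prod volume) := by
      apply Continuous.aestronglyMeasurable
      fun_prop
    have hpos : ∀ u : ℝ, 0 < b + ω.re * Real.cosh u := fun u => by
      have := Real.cosh_pos u
      positivity
    have hdom : Integrable (fun z : ℝ × ℝ => Real.exp (-(b + ω.re * Real.cosh z.2) * z.1))
        ((volume.restrict (Set.Ioi (0:ℝ))).prod volume) := by
      rw [integrable_prod_iff' hmeas2]
      refine ⟨ae_of_all _ fun u => ?_, ?_⟩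
      · exact integrableOn_exp_mul_Ioi (neg_lt_zero.2 (hpos u)) 0
      · have : ∀ u : ℝ, (∫ y in Set.Ioi (0:ℝ), ‖Real.exp (-(b + ω.re * Real.cosh u) * y)‖) =
            1 / (b + ω.re * Real.cosh u) := by
          intro u
          simp only [Real.norm_eq_abs, Real.abs_exp]
          rw [integral_exp_mul_Ioi (by have := hpos u; linarith), mul_zero, Real.exp_zero, neg_div_neg_eq]
        simp only [this]
        refine (one_div_cosh_integrable.const_mul (1 / ω.re)).mono' ?_ (ae_of_all _ fun u => ?_)
        · exact (continuous_const.div (by fun_prop) fun u => (hpos u).ne').aestronglyMeasurable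
        · have h1 := hpos u
          have h2 := Real.cosh_pos u
          rw [Real.norm_of_nonneg (by positivity), one_div_mul_one_div]
          gcongr
          linarith
    refine hdom.mono' hmeas (ae_of_all _ ?_)
    rintro ⟨y, u⟩
    simp only [Function.uncurry]
    rw [norm_mul, norm_mul, Complex.norm_exp, Complex.norm_exp]
    have e2 : (ν * u).re = 0 := by simp [hν]
    have e3 : (-(b + ω * Real.cosh u) * (y:ℂ)).re = -(b + ω.re * Real.cosh u) * y := by
      rw [Complex.re_mul_ofReal, Complex.neg_re, Complex.add_re, Complex.re_mul_ofReal, Complex.ofReal_re]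
    rw [e2, e3, Real.exp_zero, one_mul]
    exact mul_le_of_le_one_right (Real.exp_pos _).le (JI_le_one n y)


lemma integrable_abs_of {f : ℝ → ℝ} (hf : IntegrableOn f (Set.Ioi 0)) :
    Integrable (fun x : ℝ => f |x|) := by
  have h1 : IntegrableOn (fun x => f |x|) (Set.Ioi 0) := by
    refine hf.congr_fun (fun x hx => ?_) measurableSet_Ioi
    rw [abs_of_pos (by exact hx)]
  have int_Iic : IntegrableOn (fun x ↦ f |x|) (Set.Iic 0) := by
    rw [← Measure.map_neg_eq_self (volume : Measure ℝ)]
    let m : MeasurableEmbedding fun x : ℝ => -x := (Homeomorph.neg ℝ).measurableEmbedding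
    rw [m.integrableOn_map_iff]
    simp_rw [Function.comp_def, abs_neg, Set.neg_preimage, Set.neg_Iic, neg_zero]
    exact Iff.mpr integrableOn_Ici_iff_integrableOn_Ioi h1
  rw [← integrableOn_univ, ← Set.Iic_union_Ioi (a := (0:ℝ))]
  exact int_Iic.union h1

lemma sinh_lb {w : ℝ} : Real.exp w * w ≤ Real.sinh w * (1 + 2 * w) := by
  have h1 : Real.exp (-w) * (1 + 2 * w) ≤ Real.exp (-w) * Real.exp (2 * w) := by
    gcongr
    linarith [Real.add_one_le_exp (2 * w)]
  rw [← Real.exp_add, show -w + 2 * w = w by ring] at h1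
  rw [Real.sinh_eq]
  linarith

lemma cosh_le_exp {L : ℝ} (hL : 0 ≤ L) : Real.cosh L ≤ Real.exp L := by
  rw [Real.cosh_eq]
  have : Real.exp (-L) ≤ Real.exp L := Real.exp_le_exp.2 (by linarith)
  linarith

lemma inner_lb {c L u : ℝ} (hL : 0 < L) (hc : c * Real.cosh L = 1) (hu : 0 ≤ u) (huL : u < L) :
    L * (L - u) ≤ (1 - (c * Real.cosh u) ^ 2) * (1 + 2 * L) ^ 2 := by
  have hC := Real.cosh_pos L
  have e1 : (1 - (c * Real.cosh u) ^ 2) * Real.cosh L ^ 2 = Real.sinh (L - u) * Real.sinh (L + u) := by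
    rw [Real.sinh_sub, Real.sinh_add]
    have h1 := Real.cosh_sq L
    have h2 := Real.cosh_sq u
    have h3 : (c * Real.cosh u) ^ 2 * Real.cosh L ^ 2 = Real.cosh u ^ 2 := by
      rw [← mul_pow, mul_right_comm, hc, one_mul]
    linear_combination (-1) * h3 + Real.cosh u ^ 2 * h1 - Real.cosh L ^ 2 * h2
  have s1 := sinh_lb (w := L - u)
  have s2 := sinh_lb (w := L + u)
  have p1 : 0 < Real.sinh (L - u) := Real.sinh_pos_iff.2 (by linarith)
  have p2 : 0 < Real.sinh (L + u) := Real.sinh_pos_iff.2 (by linarith)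
  have t1 : Real.exp (L - u) * (L - u) ≤ Real.sinh (L - u) * (1 + 2 * L) :=
    s1.trans (by gcongr; linarith)
  have t2 : Real.exp (L + u) * L ≤ Real.sinh (L + u) * (1 + 2 * L) := by
    have h1 : (Real.exp (L + u) * L) * (1 + 2 * (L + u)) ≤ (Real.sinh (L + u) * (1 + 2 * L)) * (1 + 2 * (L + u)) := by
      calc (Real.exp (L + u) * L) * (1 + 2 * (L + u)) = Real.exp (L + u) * (L * (1 + 2 * (L + u))) := by ring
        _ ≤ Real.exp (L + u) * ((L + u) * (1 + 2 * L)) :=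
          mul_le_mul_of_nonneg_left (by nlinarith) (Real.exp_pos _).le
        _ = (Real.exp (L + u) * (L + u)) * (1 + 2 * L) := by ring
        _ ≤ (Real.sinh (L + u) * (1 + 2 * (L + u))) * (1 + 2 * L) := by gcongr
        _ = _ := by ring
    exact le_of_mul_le_mul_right h1 (by positivity)
  have t3 : (Real.exp (L - u) * (L - u)) * (Real.exp (L + u) * L) ≤
      (Real.sinh (L - u) * (1 + 2 * L)) * (Real.sinh (L + u) * (1 + 2 * L)) := by
    gcongr
  have t4 : Real.exp (L - u) * Real.exp (L + u) = Real.exp L ^ 2 := by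
    rw [← Real.exp_add, ← Real.exp_nat_mul]; congr 1; push_cast; ring
  have t5 : Real.cosh L ^ 2 ≤ Real.exp L ^ 2 := by
    gcongr; exact cosh_le_exp hL.le
  have t6 : (L * (L - u)) * Real.cosh L ^ 2 ≤ ((1 - (c * Real.cosh u) ^ 2) * (1 + 2 * L) ^ 2) * Real.cosh L ^ 2 := by
    calc (L * (L - u)) * Real.cosh L ^ 2 ≤ (L * (L - u)) * Real.exp L ^ 2 := by
          have : 0 ≤ L - u := by linarith
          gcongr
      _ = (Real.exp (L - u) * (L - u)) * (Real.exp (L + u) * L) := by rw [← t4]; ring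
      _ ≤ _ := t3
      _ = _ := by linear_combination (-(1 + 2 * L) ^ 2) * e1
  exact le_of_mul_le_mul_right t6 (by positivity)

/-- the dominating function -/
noncomputable def hB (n : ℕ) (c L u : ℝ) : ℝ :=
  if u ≤ L then (1 + 2 * L) / Real.sqrt L * (1 / Real.sqrt (L - u)) else
    c * Real.sinh u * (c * Real.cosh u - Real.sqrt ((c * Real.cosh u) ^ 2 - 1)) ^ n /
      (Real.sqrt ((c * Real.cosh u) ^ 2 - 1) * Real.sqrt (1 - c ^ 2))

lemma hB_left (n : ℕ) (c : ℝ) {L : ℝ} (hL : 0 < L) :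
    IntegrableOn (hB n c L) (Set.Ioc 0 L) ∧ ∫ u in Set.Ioc 0 L, hB n c L u = 2 * (1 + 2 * L) := by
  have hcongr : Set.EqOn (fun u => (1 + 2 * L) / Real.sqrt L * (1 / Real.sqrt (L - u))) (hB n c L) (Set.Ioc 0 L) := by
    intro u hu
    simp only [hB]
    rw [if_pos hu.2]
  have hcont : ContinuousOn (fun u : ℝ => -(2 * Real.sqrt (L - u))) (Set.Icc 0 L) := by fun_prop
  have hder : ∀ u ∈ Set.Ioo 0 L, HasDerivAt (fun u : ℝ => -(2 * Real.sqrt (L - u))) (1 / Real.sqrt (L - u)) u := by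
    intro u hu
    have h0 : 0 < L - u := sub_pos.2 hu.2
    refine ((((hasDerivAt_id u).const_sub L).sqrt h0.ne').const_mul 2).neg.congr_deriv ?_
    have := Real.sqrt_pos.2 h0
    simp only [id]
    field_simp
  have hIntg := intervalIntegral.integrableOn_deriv_of_nonneg hcont hder (fun u hu => by positivity)
  refine ⟨IntegrableOn.congr_fun (Integrable.const_mul hIntg _) hcongr measurableSet_Ioc, ?_⟩
  rw [← setIntegral_congr_fun measurableSet_Ioc hcongr, integral_const_mul,
    ← intervalIntegral.integral_of_le hL.le,
    intervalIntegral.integral_eq_sub_of_hasDerivAt_of_le hL.le hcont hder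
      ((intervalIntegrable_iff_integrableOn_Ioc_of_le hL.le).2 hIntg)]
  have := Real.sqrt_pos.2 hL
  simp only [sub_self, Real.sqrt_zero, sub_zero]
  field_simp
  ring

lemma hB_right {n : ℕ} (hn : 1 ≤ n) {c L : ℝ} (hc0 : 0 < c) (hc1 : c < 1) (hL : 0 < L) (hc : c * Real.cosh L = 1) :
    IntegrableOn (hB n c L) (Set.Ioi L) ∧ ∫ u in Set.Ioi L, hB n c L u = 1 / (n * Real.sqrt (1 - c ^ 2)) := by
  set s := Real.sqrt (1 - c ^ 2) with hs
  have hs0 : 0 < s := Real.sqrt_pos.2 (by nlinarith)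
  have hn0 : (0:ℝ) < n := by exact_mod_cast hn
  set E : ℝ → ℝ := fun u => c * Real.cosh u - Real.sqrt ((c * Real.cosh u) ^ 2 - 1) with hE
  have ha : ∀ u, L < u → 1 < c * Real.cosh u := by
    intro u hu
    rw [← hc]
    gcongr 1
    rw [Real.cosh_lt_cosh, abs_of_pos hL, abs_of_pos (hL.trans hu)]
    exact hu
  have hEb : ∀ u, L < u → 0 < E u ∧ E u ≤ 1 / (c * Real.cosh u) ∧ E u ≤ 1 := by
    intro u hu
    have h1 := ha u hu
    have h2 : 0 < (c * Real.cosh u) ^ 2 - 1 := by nlinarith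
    have h3 := Real.sqrt_pos.2 h2
    have h4 := Real.sq_sqrt h2.le
    simp only [hE]
    set a := c * Real.cosh u
    set r := Real.sqrt (a ^ 2 - 1)
    have h5 : r < a := by nlinarith
    refine ⟨by linarith, ?_, by nlinarith⟩
    rw [le_div_iff₀ (by linarith)]
    nlinarith
  have hcont : Continuous (fun u => -(E u ^ n / (n * s))) := by
    have : Continuous E := by rw [hE]; fun_prop
    fun_prop
  have hder : ∀ u ∈ Set.Ioi L, HasDerivAt (fun u => -(E u ^ n / (n * s))) (hB n c L u) u := by
    intro u hu
    have h1 := ha u hu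
    have h2 : 0 < (c * Real.cosh u) ^ 2 - 1 := by nlinarith
    have h3 := Real.sqrt_pos.2 h2
    have d1 := (Real.hasDerivAt_cosh u).const_mul c
    have d2 : HasDerivAt E (-(c * Real.sinh u * E u / Real.sqrt ((c * Real.cosh u) ^ 2 - 1))) u := by
      refine (d1.sub (((d1.pow 2).sub_const 1).sqrt h2.ne')).congr_deriv ?_
      simp only [hE, Pi.pow_apply]
      generalize Real.sqrt ((c * Real.cosh u) ^ 2 - 1) = r at h3 ⊢
      field_simp
      push_cast
      ring
    refine (((d2.pow n).div_const (n * s)).neg).congr_deriv ?_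
    rw [hB, if_neg (not_le.2 hu)]
    have : E u ^ n = E u ^ (n - 1) * E u := by rw [← pow_succ, Nat.sub_add_cancel hn]
    change _ = c * Real.sinh u * (E u) ^ n / (_ * s)
    rw [this]
    field_simp
  have hnonneg : ∀ u ∈ Set.Ioi L, 0 ≤ hB n c L u := by
    intro u hu
    rw [hB, if_neg (not_le.2 hu)]
    have h1 := (hEb u hu).1.le
    have h2 : 0 ≤ Real.sinh u := (Real.sinh_pos_iff.2 (hL.trans hu)).le
    change 0 ≤ c * Real.sinh u * (E u) ^ n / (_ * s)
    positivity
  have hlim : Tendsto (fun u => -(E u ^ n / (n * s))) atTop (nhds 0) := by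
    have h1 : Tendsto (fun u => 1 / (c * Real.cosh u)) atTop (nhds 0) := by
      have h0 : Tendsto (fun u => c * Real.cosh u) atTop atTop := by
        refine Tendsto.const_mul_atTop hc0 ?_
        refine tendsto_atTop_mono (f := fun u => Real.exp u * (1 / 2)) (fun u => ?_)
          (Real.tendsto_exp_atTop.atTop_mul_const (by norm_num))
        rw [Real.cosh_eq]
        have := Real.exp_pos (-u)
        linarith
      simp only [one_div]
      exact tendsto_inv_atTop_zero.comp h0
    have h2 : Tendsto (fun u => E u ^ n) atTop (nhds 0) := by
      refine squeeze_zero' ?_ ?_ h1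
      · filter_upwards [eventually_gt_atTop L] with u hu
        exact pow_nonneg (hEb u hu).1.le n
      · filter_upwards [eventually_gt_atTop L] with u hu
        obtain ⟨q1, q2, q3⟩ := hEb u hu
        exact (pow_le_of_le_one q1.le q3 (by omega)).trans q2
    simpa using (h2.div_const (n * s)).neg
  refine ⟨integrableOn_Ioi_deriv_of_nonneg hcont.continuousWithinAt hder hnonneg hlim, ?_⟩
  rw [integral_Ioi_of_hasDerivAt_of_nonneg hcont.continuousWithinAt hder hnonneg hlim]
  have : E L = 1 := by simp [hE, hc]
  rw [this]; simp

lemma hB_dom {n : ℕ} {c L : ℝ} (hc0 : 0 < c) (hc1 : c < 1) (hL : 0 < L) (hc : c * Real.cosh L = 1)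
    {u : ℝ} (hu : |u| ≠ L) {p : ℂ} (hp : 0 < p.re) (him : |p.im| = c * Real.cosh u) :
    ‖FB n p‖ ≤ hB n c L |u| := by
  rw [← Real.cosh_abs u] at him
  have hu0 := abs_nonneg u
  generalize |u| = v at *
  rcases lt_or_gt_of_ne hu with h | h
  · have ha : c * Real.cosh v < 1 := by
      rw [← hc]
      gcongr 1
      rw [Real.cosh_lt_cosh, abs_of_pos hL, abs_of_nonneg hu0]
      exact h
    refine (FB_bound_lt hp him ha).trans ?_
    rw [hB, if_pos h.le]
    have h1 := inner_lb hL hc hu0 h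
    have h2 : 0 < L - v := by linarith
    have h0 : 0 ≤ c * Real.cosh v := by have := Real.cosh_pos v; positivity
    have h3 : 0 < 1 - (c * Real.cosh v) ^ 2 := by nlinarith
    have h4 := Real.sqrt_le_sqrt h1
    rw [Real.sqrt_mul hL.le, Real.sqrt_mul h3.le, Real.sqrt_sq (by positivity)] at h4
    rw [div_mul_div_comm, mul_one, div_le_div_iff₀ (Real.sqrt_pos.2 h3)
      (mul_pos (Real.sqrt_pos.2 hL) (Real.sqrt_pos.2 h2))]
    linarith
  · have ha : 1 < c * Real.cosh v := by
      rw [← hc]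
      gcongr 1
      rw [Real.cosh_lt_cosh, abs_of_pos hL, abs_of_nonneg hu0]
      exact h
    refine (FB_bound_gt hp him ha).trans ?_
    rw [hB, if_neg (not_le.2 h)]
    have hs : Real.sqrt (1 - c ^ 2) ≤ c * Real.sinh v := by
      have hsv : 0 < Real.sinh v := Real.sinh_pos_iff.2 (hL.trans h)
      apply Real.sqrt_le_iff.2
      refine ⟨by positivity, ?_⟩
      have := Real.cosh_sq v
      nlinarith
    have hs0 : 0 < Real.sqrt (1 - c ^ 2) := Real.sqrt_pos.2 (by nlinarith)
    have h2 : 0 < (c * Real.cosh v) ^ 2 - 1 := by nlinarith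
    have h3 := Real.sqrt_pos.2 h2
    have h5 : Real.sqrt ((c * Real.cosh v) ^ 2 - 1) ≤ c * Real.cosh v := by
      apply Real.sqrt_le_iff.2
      constructor <;> nlinarith
    have h6 : 0 ≤ (c * Real.cosh v - Real.sqrt ((c * Real.cosh v) ^ 2 - 1)) ^ n := pow_nonneg (by linarith) n
    rw [div_le_div_iff₀ h3 (by positivity)]
    generalize (c * Real.cosh v - Real.sqrt ((c * Real.cosh v) ^ 2 - 1)) ^ n = En at *
    generalize Real.sqrt ((c * Real.cosh v) ^ 2 - 1) = r at *
    nlinarith [mul_le_mul_of_nonneg_left hs (mul_nonneg h6 h3.le)]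

lemma int_FB_bound {n : ℕ} (hn : 1 ≤ n) {c L b : ℝ} (hc0 : 0 < c) (hc1 : c < 1) (hL : 0 < L)
    (hc : c * Real.cosh L = 1) (hb : 0 < b) {ν ω : ℂ} (hν : ν.re = 0) (hω : 0 < ω.re) (hωi : |ω.im| = c) :
    ‖∫ u : ℝ, Complex.exp (ν * u) * FB n (b + ω * Real.cosh u)‖ ≤
      2 * (2 * (1 + 2 * L) + 1 / (n * Real.sqrt (1 - c ^ 2))) := by
  obtain ⟨l1, l2⟩ := hB_left n c hL
  obtain ⟨r1, r2⟩ := hB_right hn hc0 hc1 hL hc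
  have hu : Set.Ioc 0 L ∪ Set.Ioi L = Set.Ioi 0 := Set.Ioc_union_Ioi_eq_Ioi hL.le
  have hI : IntegrableOn (hB n c L) (Set.Ioi 0) := by rw [← hu]; exact l1.union r1
  have hV : ∫ u in Set.Ioi 0, hB n c L u = 2 * (1 + 2 * L) + 1 / (n * Real.sqrt (1 - c ^ 2)) := by
    rw [← hu, setIntegral_union (Set.Ioc_disjoint_Ioi le_rfl) measurableSet_Ioi l1 r1, l2, r2]
  rw [← hV, ← integral_comp_abs]
  refine norm_integral_le_of_norm_le (integrable_abs_of hI) ?_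
  have hae : ∀ᵐ u : ℝ, u ∉ ({L, -L} : Set ℝ) :=
    measure_eq_zero_iff_ae_notMem.1 ((Set.toFinite _).measure_zero _)
  filter_upwards [hae] with u hu'
  rw [norm_mul, Complex.norm_exp]
  have e2 : (ν * u).re = 0 := by simp [hν]
  rw [e2, Real.exp_zero, one_mul]
  have hcu := Real.cosh_pos u
  refine hB_dom hc0 hc1 hL hc ?_ ?_ ?_
  · intro h
    apply hu'
    rcases abs_choice u with h1 | h1
    · left; linarith
    · right; show u = -L; linarith
  · rw [Complex.add_re, Complex.re_mul_ofReal, Complex.ofReal_re]; positivity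
  · rw [Complex.add_im, Complex.im_mul_ofReal, Complex.ofReal_im, zero_add, abs_mul, hωi, abs_of_pos hcu]


lemma piece_meas (ν : ℂ) (n : ℕ) (b : ℝ) {ω : ℂ} (hω : 0 < ω.re) :
    AEStronglyMeasurable (fun y : ℝ => Complex.exp (-(b * y)) * JI n y * KB ν (ω * y))
      (volume.restrict (Set.Ioi 0)) := by
  apply ContinuousOn.aestronglyMeasurable _ measurableSet_Ioi
  have := JI_continuous n
  refine ContinuousOn.mul (by fun_prop) ?_
  intro y hy
  have hy0 : (0:ℝ) < y := hy
  apply ContinuousAt.continuousWithinAt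
  have h1 : 0 < (ω * (y:ℂ)).re := by rw [Complex.re_mul_ofReal]; positivity
  have h2 : ContinuousAt (fun y : ℝ => ω * (y:ℂ)) y := by fun_prop
  exact ContinuousAt.comp (f := fun y : ℝ => ω * (y:ℂ)) (KB_hasDerivAt h1 ν).continuousAt h2

lemma piece_bound {ν : ℂ} {M : ℝ} (hM : 0 ≤ M)
    (hK : ∀ x : ℂ, 0 < x.re → ‖KB ν x‖ ≤ M * (1 + 1 / ‖x‖)) {n : ℕ} (hn : 1 ≤ n) (b : ℝ) {ω : ℂ}
    (hω : 0 < ω.re) {c : ℝ} (hc : 0 < c) (hcω : c ≤ ‖ω‖) {y : ℝ} (hy : 0 < y) :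
    ‖Complex.exp (-(b * y)) * JI n y * KB ν (ω * y)‖ ≤ M * (1 + 1 / c) * Real.exp (-b * y) := by
  have h1 : 0 < (ω * (y:ℂ)).re := by rw [Complex.re_mul_ofReal]; positivity
  have h2 := hK _ h1
  rw [norm_mul, Complex.norm_real, Real.norm_of_nonneg hy.le] at h2
  have h3 := JI_le_one n y
  have h4 := JI_le_self hn hy
  have hw : 0 < ‖ω‖ := hc.trans_le hcω
  have h5 : ‖JI n y‖ * (1 + 1 / (‖ω‖ * y)) ≤ 1 + 1 / c := by
    rw [mul_add, mul_one]
    have h6 : ‖JI n y‖ * (1 / (‖ω‖ * y)) ≤ y * (1 / (c * y)) := by gcongr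
    have h7 : y * (1 / (c * y)) = 1 / c := by field_simp
    linarith
  rw [norm_mul, norm_mul, Complex.norm_exp]
  have e1 : (-((b:ℂ) * y)).re = -b * y := by simp
  rw [e1]
  calc Real.exp (-b * y) * ‖JI n y‖ * ‖KB ν (ω * y)‖
      ≤ Real.exp (-b * y) * ‖JI n y‖ * (M * (1 + 1 / (‖ω‖ * y))) := by gcongr
    _ = Real.exp (-b * y) * M * (‖JI n y‖ * (1 + 1 / (‖ω‖ * y))) := by ring
    _ ≤ Real.exp (-b * y) * M * (1 + 1 / c) := by gcongr
    _ = _ := by ring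

lemma main_bound {k : ℕ} (hk : 1 ≤ k) {t : ℝ} (ht : t ≠ 0) {c L b : ℝ} (hc0 : 0 < c) (hc1 : c < 1)
    (hL : 0 < L) (hc : c * Real.cosh L = 1) (hb : 0 < b) :
    ‖∫ y in Set.Ioi (0 : ℝ), Complex.exp (-(b * y)) * besselJ (2 * (k : ℂ) - 1) y *
              kplus (y * c) (1 / 2 + Complex.I * t)‖ ≤
      2 * (1 + 2 * L) + 1 / (((2 * k - 1 : ℕ) : ℝ) * Real.sqrt (1 - c ^ 2)) := by
  set n := 2 * k - 1 with hnd
  have hn : 1 ≤ n := by omega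
  set ν : ℂ := 2 * (Complex.I * t) with hνd
  have hν : ν.re = 0 := by simp [hνd]
  obtain ⟨M, hM, hK⟩ := KB_bound hν
  set T := 2 * (1 + 2 * L) + 1 / ((n : ℝ) * Real.sqrt (1 - c ^ 2)) with hT
  have hT0 : 0 ≤ T := by positivity
  set P : ℂ → ℝ → ℂ := fun ω y => Complex.exp (-(b * y)) * JI n y * KB ν (ω * y) with hP
  have r1 : ∀ ε : ℝ, ((ε:ℂ) + c * Complex.I).re = ε := by intro ε; simp
  have r2 : ∀ ε : ℝ, ((ε:ℂ) + c * (-Complex.I)).re = ε := by intro ε; simp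
  have i1 : ∀ ε : ℝ, |((ε:ℂ) + c * Complex.I).im| = c := by intro ε; simp [abs_of_pos hc0]
  have i2 : ∀ ε : ℝ, |((ε:ℂ) + c * (-Complex.I)).im| = c := by intro ε; simp [abs_of_pos hc0]
  have hexp : IntegrableOn (fun y : ℝ => M * (1 + 1 / c) * Real.exp (-b * y)) (Set.Ioi 0) :=
    Integrable.const_mul (integrableOn_exp_mul_Ioi (by linarith) 0) _
  have hPb : ∀ ω : ℂ, 0 < ω.re → |ω.im| = c → ∀ y : ℝ, 0 < y →
      ‖P ω y‖ ≤ M * (1 + 1 / c) * Real.exp (-b * y) := fun ω h1 h2 y hy =>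
    piece_bound hM hK hn b h1 hc0 (h2 ▸ Complex.abs_im_le_norm ω) hy
  have hPi : ∀ ω : ℂ, 0 < ω.re → |ω.im| = c → IntegrableOn (P ω) (Set.Ioi 0) := by
    intro ω h1 h2
    refine Integrable.mono' hexp (piece_meas ν n b h1) ?_
    filter_upwards [ae_restrict_mem measurableSet_Ioi] with y hy
    exact hPb ω h1 h2 y hy
  have hPn : ∀ ω : ℂ, 0 < ω.re → |ω.im| = c → ‖∫ y in Set.Ioi (0:ℝ), P ω y‖ ≤ 2 * T := by
    intro ω h1 h2
    simp only [hP]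
    rw [fubini_KB hν n hb h1]
    exact int_FB_bound hn hc0 hc1 hL hc hb hν h1 h2
  have hpi := Real.pi_gt_three
  have ep : ‖(1 / (2 * Real.pi) : ℂ)‖ = 1 / (2 * Real.pi) := by
    rw [norm_div, norm_mul, Complex.norm_real, Real.norm_of_nonneg (by linarith)]; simp
  set F : ℝ → ℝ → ℂ := fun ε y => (1 / (2 * Real.pi) : ℂ) *
    (P (ε + c * Complex.I) y + P (ε + c * (-Complex.I)) y) with hF
  have hlim : Tendsto (fun ε : ℝ => ∫ y in Set.Ioi (0:ℝ), F ε y) (nhdsWithin 0 (Set.Ioi 0))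
      (nhds (∫ y in Set.Ioi (0 : ℝ), Complex.exp (-(b * y)) * besselJ (2 * (k : ℂ) - 1) y *
              kplus (y * c) (1 / 2 + Complex.I * t))) := by
    refine tendsto_integral_filter_of_dominated_convergence
      (fun y => (1 / (2 * Real.pi)) * (2 * (M * (1 + 1 / c) * Real.exp (-b * y)))) ?_ ?_ ?_ ?_
    · filter_upwards [self_mem_nhdsWithin] with ε hε
      have hε' : (0:ℝ) < ε := hε
      exact ((piece_meas ν n b (by rw [r1]; exact hε')).add
        (piece_meas ν n b (by rw [r2]; exact hε'))).const_mul _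
    · filter_upwards [self_mem_nhdsWithin] with ε hε
      have hε' : (0:ℝ) < ε := hε
      filter_upwards [ae_restrict_mem measurableSet_Ioi] with y hy
      simp only [hF]
      rw [norm_mul, ep]
      have a1 := hPb _ (by rw [r1]; exact hε') (i1 ε) y hy
      have a2 := hPb _ (by rw [r2]; exact hε') (i2 ε) y hy
      have a3 := norm_add_le (P (ε + c * Complex.I) y) (P (ε + c * (-Complex.I)) y)
      gcongr
      linarith
    · exact (Integrable.const_mul hexp 2).const_mul _
    · filter_upwards [ae_restrict_mem measurableSet_Ioi] with y hy
      have hy0 : (0:ℝ) < y := hy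
      rw [besselJ_int hk hy0]
      refine ((kplus_lim ht hy0 hc0).const_mul (Complex.exp (-(b * y)) * JI n y)).congr fun ε => ?_
      simp only [hF, hP]
      ring
  refine le_of_tendsto hlim.norm ?_
  filter_upwards [self_mem_nhdsWithin] with ε hε
  have hε' : (0:ℝ) < ε := hε
  have b1 : 0 < ((ε:ℂ) + c * Complex.I).re := by rw [r1]; exact hε'
  have b2 : 0 < ((ε:ℂ) + c * (-Complex.I)).re := by rw [r2]; exact hε'
  simp only [hF]
  rw [integral_const_mul, integral_add (hPi _ b1 (i1 ε)) (hPi _ b2 (i2 ε)), norm_mul, ep]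
  have a1 := hPn _ b1 (i1 ε)
  have a2 := hPn _ b2 (i2 ε)
  have a3 := norm_add_le (∫ y in Set.Ioi (0:ℝ), P (ε + c * Complex.I) y)
    (∫ y in Set.Ioi (0:ℝ), P (ε + c * (-Complex.I)) y)
  rw [one_div, inv_mul_le_iff₀ (by positivity)]
  nlinarith


/-- There is an absolute constant `C > 0` such that for every integer `k ≥ 1`, real `t` and
`0 < z < 1`, the Abel limit
`I(z) = lim_{b→0⁺} ∫₀^∞ e^{-by} J_{2k-1}(y) k⁺(y√z, 1/2+it) dy` satisfies
`|I(z)| ≤ C (1 + |log z| + 1/((2k-1)√(1-z)))`. -/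
theorem abel_limit_bound :
    ∃ C : ℝ, 0 < C ∧ ∀ (k : ℕ), 1 ≤ k → ∀ (t z : ℝ), 0 < z → z < 1 →
      ∀ I : ℂ,
        Tendsto (fun b : ℝ => ∫ y in Set.Ioi (0 : ℝ),
            Complex.exp (-(b * y)) * besselJ (2 * (k : ℂ) - 1) y *
              kplus (y * Real.sqrt z) (1 / 2 + Complex.I * t))
          (nhdsWithin 0 (Set.Ioi 0)) (nhds I) →
        ‖I‖ ≤ C * (1 + |Real.log z| + 1 / ((2 * (k : ℝ) - 1) * Real.sqrt (1 - z))) := by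
  refine ⟨5, by norm_num, ?_⟩
  intro k hk t z hz0 hz1 I hI
  have hk1 : (1:ℝ) ≤ k := by exact_mod_cast hk
  have hk' : (0:ℝ) < 2 * (k:ℝ) - 1 := by linarith
  have hR : 0 ≤ 1 / ((2 * (k : ℝ) - 1) * Real.sqrt (1 - z)) := by positivity
  by_cases ht : t = 0
  · subst ht
    have h0 : ∀ y : ℝ, kplus y (1 / 2 + Complex.I * ((0:ℝ) : ℂ)) = 0 := by
      intro y
      rw [kplus, Complex.ofReal_zero, mul_zero, add_zero, mul_one_div (Real.pi : ℂ) 2, Complex.cos_pi_div_two]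
      simp
    simp only [h0, mul_zero, integral_zero] at hI
    have hI0 : I = 0 := tendsto_nhds_unique hI tendsto_const_nhds
    rw [hI0, norm_zero]
    have := abs_nonneg (Real.log z)
    positivity
  · set c := Real.sqrt z with hcd
    have hc0 : 0 < c := Real.sqrt_pos.2 hz0
    have hcz : c ^ 2 = z := Real.sq_sqrt hz0.le
    have hc1 : c < 1 := by nlinarith
    have h1c : 1 < 1 / c := by rw [lt_div_iff₀ hc0]; linarith
    set L := Real.arcosh (1 / c) with hLd
    have hL : 0 < L := Real.arcosh_pos h1c
    have hch : Real.cosh L = 1 / c := Real.cosh_arcosh h1c.le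
    have hc : c * Real.cosh L = 1 := by rw [hch]; field_simp
    have hLb : L ≤ Real.log 2 + |Real.log z| / 2 := by
      have h1 : Real.exp L ≤ 2 * (1 / c) := by
        rw [← hch, Real.cosh_eq]
        have := Real.exp_pos (-L)
        linarith
      have h2 : L ≤ Real.log (2 * (1 / c)) := (Real.le_log_iff_exp_le (by positivity)).2 h1
      rw [Real.log_mul (by norm_num) (by positivity), one_div, Real.log_inv, hcd, Real.log_sqrt hz0.le] at h2
      rw [abs_of_nonpos (Real.log_nonpos hz0.le hz1.le)]
      linarith
    have hlog2 : Real.log 2 < 0.6931471808 := Real.log_two_lt_d9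
    refine le_of_tendsto hI.norm ?_
    filter_upwards [self_mem_nhdsWithin] with b hb
    have hb' : (0:ℝ) < b := hb
    refine (main_bound hk ht hc0 hc1 hL hc hb').trans ?_
    have hkc : ((2 * k - 1 : ℕ) : ℝ) = 2 * (k:ℝ) - 1 := by
      rw [Nat.cast_sub (by omega)]; push_cast; ring
    rw [hkc, hcz]
    have := abs_nonneg (Real.log z)
    linarith
end

section
/- Let \(k\geq 1\) be an integer and \(c>1\). Then \(\lim_{b\to 0^{+}}\int_{0}^{\infty}e^{-by}\,J_{2k-1}(y)\,\cos(cy)\,dy = \frac{(-1)^k}{\sqrt{c^2-1}\,\bigl(c+\sqrt{c^2-1}\bigr)^{2k-1}}\) (for each \(b>0\) the integral converges absolutely). -/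
open MeasureTheory Filter

/-- The Bessel function of the first kind of nonnegative integer order `m`, for real `y`:
`J_m(y) = ∑_{n≥0} (-1)^n / (n! (n+m)!) (y/2)^{m+2n}`. -/
noncomputable def besselJr (m : ℕ) (y : ℝ) : ℝ :=
  ∑' n : ℕ, (-1 : ℝ) ^ n / ((n.factorial : ℝ) * ((n + m).factorial : ℝ)) *
    (y / 2) ^ (m + 2 * n)

lemma aux_congr {ι : Type} {f g : ι → ℂ} {a b : ℂ} (h : HasSum f a) (hfg : ∀ i, g i = f i)
    (hab : b = a) : HasSum g b := by
  rw [hab, funext hfg]; exact h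

lemma aux_int_exp (n : ℤ) :
    ∫ θ in (0:ℝ)..(2 * Real.pi), Complex.exp (n * θ * Complex.I) =
      if n = 0 then (2 * Real.pi : ℂ) else 0 := by
  split_ifs with h
  · subst h; simp
  · have hn : (n : ℂ) * Complex.I ≠ 0 := by
      simp [h]
    have h1 : ∀ θ : ℝ, Complex.exp (n * θ * Complex.I) = Complex.exp ((n * Complex.I) * θ) := by
      intro θ; congr 1; ring
    simp_rw [h1]
    rw [integral_exp_mul_complex hn]
    have : Complex.exp ((n * Complex.I) * ((2 * Real.pi : ℝ) : ℂ)) = 1 := by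
      rw [Complex.exp_eq_one_iff]
      exact ⟨n, by push_cast; ring⟩
    rw [this]; simp

lemma aux_key {ι : Type} [Countable ι] (a : ι → ℂ) (ha : Summable fun i => ‖a i‖) (n : ι → ℤ)
    (F : ℝ → ℂ) (hF : ∀ θ : ℝ, HasSum (fun i => a i * Complex.exp (n i * θ * Complex.I)) (F θ)) :
    HasSum (fun i => if n i = 0 then (2 * Real.pi : ℂ) * a i else 0)
      (∫ θ in (0:ℝ)..(2 * Real.pi), F θ) := by
  have h := intervalIntegral.hasSum_integral_of_dominated_convergence (μ := volume)
    (a := (0:ℝ)) (b := 2 * Real.pi)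
    (F := fun i θ => a i * Complex.exp (n i * θ * Complex.I)) (f := F)
    (fun i _ => ‖a i‖)
    (fun i => (Continuous.aestronglyMeasurable (by fun_prop)))
    (fun i => ae_of_all _ fun θ _ => by
      rw [norm_mul]
      have : ‖Complex.exp (n i * θ * Complex.I)‖ = 1 := by
        have := Complex.norm_exp_ofReal_mul_I (n i * θ)
        push_cast at this; exact this
      rw [this, mul_one])
    (ae_of_all _ fun θ _ => ha)
    (by simp)
    (ae_of_all _ fun θ _ => hF θ)
  refine aux_congr h (fun i => ?_) rfl
  rw [intervalIntegral.integral_const_mul, aux_int_exp]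
  split_ifs <;> ring

lemma aux_e1 (z : ℂ) : Summable fun n : ℕ => ‖z ^ n / (n.factorial : ℂ)‖ :=
  NormedSpace.norm_expSeries_div_summable z

lemma aux_e2 (z : ℂ) : HasSum (fun n : ℕ => z ^ n / (n.factorial : ℂ)) (Complex.exp z) := by
  rw [Complex.exp_eq_exp_ℂ]; exact NormedSpace.expSeries_div_hasSum_exp z

lemma aux_gen1 (f g : ℕ → ℂ) (hf : Summable fun n => ‖f n‖) (hg : Summable fun n => ‖g n‖) :
    Summable fun p : ℕ × ℕ => ‖f p.1 * g p.2‖ := by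
  have h := hf.mul_of_nonneg hg (fun _ => norm_nonneg _) (fun _ => norm_nonneg _)
  simp only [norm_mul]
  exact h

lemma aux_gen2 (f g : ℕ → ℂ) (a b : ℂ) (hf : Summable fun n => ‖f n‖)
    (hg : Summable fun n => ‖g n‖) (ha : HasSum f a) (hb : HasSum g b) :
    HasSum (fun p : ℕ × ℕ => f p.1 * g p.2) (a * b) :=
  ha.mul hb (aux_gen1 f g hf hg).of_norm

lemma aux_prod (z w : ℂ) : Summable fun p : ℕ × ℕ =>
    ‖(z ^ p.1 / (p.1.factorial : ℂ)) * (w ^ p.2 / (p.2.factorial : ℂ))‖ :=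
  aux_gen1 (fun n => z ^ n / (n.factorial : ℂ)) (fun n => w ^ n / (n.factorial : ℂ))
    (aux_e1 z) (aux_e1 w)

lemma aux_prod2 (z w : ℂ) : HasSum (fun p : ℕ × ℕ =>
    (z ^ p.1 / (p.1.factorial : ℂ)) * (w ^ p.2 / (p.2.factorial : ℂ)))
    (Complex.exp z * Complex.exp w) :=
  aux_gen2 (fun n => z ^ n / (n.factorial : ℂ)) (fun n => w ^ n / (n.factorial : ℂ)) _ _
    (aux_e1 z) (aux_e1 w) (aux_e2 z) (aux_e2 w)

lemma aux_pt (m : ℕ) (y θ : ℝ) : HasSum (fun p : ℕ × ℕ =>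
    ((y / 2 : ℂ) ^ p.1 / (p.1.factorial : ℂ)) * ((-(y / 2) : ℂ) ^ p.2 / (p.2.factorial : ℂ)) *
      Complex.exp ((((p.1 : ℤ) - p.2 - m : ℤ) : ℂ) * θ * Complex.I))
    (Complex.exp ((y * Real.sin θ - m * θ : ℝ) * Complex.I)) := by
  have h3 := (aux_prod2 ((y / 2 : ℂ) * Complex.exp (θ * Complex.I))
    (-(y / 2 : ℂ) * Complex.exp (-(θ * Complex.I)))).mul_right
        (Complex.exp (-(m * θ * Complex.I)))
  refine aux_congr h3 (fun p => ?_) ?_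
  · rw [mul_pow, mul_pow, ← Complex.exp_nat_mul, ← Complex.exp_nat_mul]
    have : Complex.exp ((((p.1 : ℤ) - p.2 - m : ℤ) : ℂ) * θ * Complex.I) =
      Complex.exp (p.1 * (θ * Complex.I)) * Complex.exp (p.2 * (-(θ * Complex.I))) *
        Complex.exp (-(m * θ * Complex.I)) := by
      rw [← Complex.exp_add, ← Complex.exp_add]; congr 1; push_cast; ring
    rw [this]; ring
  · rw [← Complex.exp_add, ← Complex.exp_add]; congr 1
    push_cast
    rw [Complex.sin, ← neg_mul]
    linear_combination (y:ℂ) / 2 *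
      (Complex.exp (-θ * Complex.I) - Complex.exp (θ * Complex.I)) * Complex.I_sq

lemma aux_bessel (m : ℕ) (y : ℝ) :
    ∫ θ in (0:ℝ)..(2 * Real.pi), Complex.exp ((y * Real.sin θ - m * θ : ℝ) * Complex.I) =
      (2 * Real.pi : ℂ) * (besselJr m y : ℂ) := by
  have key := aux_key (ι := ℕ × ℕ) _ (aux_prod (y / 2 : ℂ) (-(y / 2) : ℂ))
    (fun p => (p.1 : ℤ) - p.2 - m) _ (aux_pt m y)
  have hinj : Function.Injective (fun n : ℕ => ((n + m, n) : ℕ × ℕ)) := by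
    intro a b h; exact congrArg Prod.snd h
  have key2 := (hinj.hasSum_iff (by
    rintro ⟨p, q⟩ hx
    refine if_neg fun h => hx ⟨q, ?_⟩
    have : q + m = p := by simp only at h; omega
    simp only [this])).mpr key
  rw [← key2.tsum_eq, besselJr, Complex.ofReal_tsum, ← tsum_mul_left]
  refine tsum_congr fun n => ?_
  simp only [Function.comp]
  rw [if_pos (by push_cast; ring)]
  have hf : ∀ k : ℕ, (k.factorial : ℂ) ≠ 0 := fun k => by exact_mod_cast k.factorial_ne_zero
  have h1 := hf n
  have h2 := hf (n + m)
  push_cast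
  rw [neg_pow, show m + 2 * n = (n + m) + n by ring, pow_add _ (n + m) n]
  field_simp

lemma aux_poisson (m : ℕ) (hm : 1 ≤ m) (c : ℝ) (hc : 1 < c) :
    ∫ θ in (0:ℝ)..(2 * Real.pi), Complex.exp (-(m * θ * Complex.I)) / (c + Real.sin θ : ℝ) =
      (2 * Real.pi : ℂ) * (Complex.I / (c + Real.sqrt (c ^ 2 - 1) : ℝ)) ^ m /
        (Real.sqrt (c ^ 2 - 1) : ℝ) := by
  set r := Real.sqrt (c ^ 2 - 1) with hr
  have hr2 : r ^ 2 = c ^ 2 - 1 := Real.sq_sqrt (by nlinarith)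
  have hr0 : 0 < r := Real.sqrt_pos.mpr (by nlinarith)
  set q := 1 / (c + r) with hq
  have hq0 : 0 < q := by positivity
  have hq1 : q < 1 := by rw [hq, div_lt_one (by positivity)]; linarith
  have hqc : q = c - r := by
    rw [hq, div_eq_iff (by positivity)]; linarith
  have hw : ∀ θ : ℝ, ‖Complex.exp (θ * Complex.I)‖ = 1 := Complex.norm_exp_ofReal_mul_I
  have hnI : ‖Complex.I * q‖ = q := by simp [abs_of_pos hq0]
  have hnI' : ‖-(Complex.I * q)‖ = q := by rw [norm_neg, hnI]
  have hsum : ∀ z : ℂ, ‖z‖ = q → Summable fun n : ℕ => ‖z ^ n‖ := by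
    intro z hz
    simp_rw [norm_pow, hz]
    exact summable_geometric_of_lt_one hq0.le hq1
  have hexp : ∀ (n : ℕ) (θ : ℝ), Complex.exp (n * (θ * Complex.I)) = Complex.exp (θ * Complex.I) ^ n :=
    fun n θ => Complex.exp_nat_mul _ _
  have k1 := aux_key (ι := ℕ ⊕ ℕ)
    (Sum.elim (fun n => (Complex.I * q) ^ n) (fun n => (-(Complex.I * q)) ^ (n + 1)))
    (by
      refine Summable.sum _ ?_ ?_
      · exact hsum _ hnI
      · exact (summable_nat_add_iff 1).mpr (hsum _ hnI'))
    (Sum.elim (fun n => (n : ℤ) - m) (fun n => -((n : ℤ) + 1) - m))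
    (fun θ => r * (Complex.exp (-(m * θ * Complex.I)) / (c + Real.sin θ : ℝ)))
    (by
      intro θ
      have g1 := (hasSum_geometric_of_norm_lt_one
        (ξ := Complex.I * q * Complex.exp (θ * Complex.I)) (by
          rw [norm_mul, hw, hnI, mul_one]; exact hq1)).mul_right (Complex.exp (-(m * θ * Complex.I)))
      have hw' : ‖-(Complex.I * q) * Complex.exp (-(θ * Complex.I))‖ < 1 := by
          rw [norm_mul, Complex.exp_neg, norm_inv, hw, hnI']; simpa using hq1
      have g2 := ((hasSum_geometric_of_norm_lt_one hw').mul_left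
        (-(Complex.I * q) * Complex.exp (-(θ * Complex.I)))).mul_right
          (Complex.exp (-(m * θ * Complex.I)))
      have hne1 : 1 - Complex.I * q * Complex.exp (θ * Complex.I) ≠ 0 := by
        intro h
        have := congrArg norm (sub_eq_zero.mp h)
        rw [norm_mul, hw, hnI] at this; simp at this; linarith
      have hne2 : 1 - -(Complex.I * q) * Complex.exp (-(θ * Complex.I)) ≠ 0 := by
        intro h
        rw [← sub_eq_zero.mp h] at hw'; simp at hw'
      have hcs : ((c + Real.sin θ : ℝ) : ℂ) ≠ 0 := by
        have := Real.neg_one_le_sin θ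
        exact_mod_cast (by linarith : 0 < c + Real.sin θ).ne'
      have G := HasSum.sum (f := fun x : ℕ ⊕ ℕ =>
          (Sum.elim (fun n : ℕ => (Complex.I * q) ^ n) (fun n : ℕ => (-(Complex.I * q)) ^ (n + 1)) x : ℂ)
          * Complex.exp (((Sum.elim (fun n : ℕ => (n : ℤ) - m) (fun n : ℕ => -((n : ℤ) + 1) - m) x : ℤ) : ℂ)
            * θ * Complex.I))
        (aux_congr g1 (fun n => by
          simp only [Function.comp, Sum.elim_inl]
          rw [mul_pow _ (Complex.exp _), ← hexp, mul_assoc (_ ^ n), ← Complex.exp_add]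
          congr 2; push_cast; ring) rfl)
        (aux_congr g2 (fun n => by
          simp only [Function.comp, Sum.elim_inr]
          rw [← pow_succ', mul_pow, ← Complex.exp_nat_mul, mul_assoc (_ ^ (n + 1)), ← Complex.exp_add]
          congr 2; push_cast; ring) rfl)
      refine aux_congr G (fun _ => rfl) ?_
      have hww : Complex.exp (θ * Complex.I) * Complex.exp (-(θ * Complex.I)) = 1 := by
        rw [← Complex.exp_add]; simp
      have hsin : ((Real.sin θ : ℝ) : ℂ) =
          (Complex.exp (-(θ * Complex.I)) - Complex.exp (θ * Complex.I)) * Complex.I / 2 := by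
        rw [Complex.ofReal_sin, Complex.sin, ← neg_mul]
      have hrC : (r : ℂ) = c - q := by rw [hqc]; push_cast; ring
      have hqq : (q : ℂ) ^ 2 = 2 * c * q - 1 := by
        have : q ^ 2 = 2 * c * q - 1 := by rw [hqc]; nlinarith
        exact_mod_cast this
      rw [Complex.ofReal_add] at hcs ⊢
      rw [hsin] at hcs ⊢
      rw [hrC]
      generalize Complex.exp (-(θ * Complex.I)) = v at *
      generalize Complex.exp (θ * Complex.I) = w at *
      have hI := Complex.I_sq
      have hq0' : (q : ℂ) ≠ 0 := by exact_mod_cast hq0.ne'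
      have hden : (1 - Complex.I * q * w) * (1 - -(Complex.I * q) * v) =
          2 * q * (c + (v - w) * Complex.I / 2) := by
        linear_combination (-q ^ 2 * w * v) * hI + q ^ 2 * hww + hqq
      have hnum : (1 - -(Complex.I * q) * v) + (-(Complex.I * q) * v) * (1 - Complex.I * q * w) =
          2 * q * (c - q) := by
        linear_combination (q ^ 2 * w * v) * hI - q ^ 2 * hww + hqq
      have hstep : (1 - Complex.I * q * w)⁻¹ + (-(Complex.I * q) * v) * (1 - -(Complex.I * q) * v)⁻¹ =
          (c - q) / (c + (v - w) * Complex.I / 2) := by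
        have : (1 - Complex.I * q * w)⁻¹ + (-(Complex.I * q) * v) * (1 - -(Complex.I * q) * v)⁻¹ =
          ((1 - -(Complex.I * q) * v) + (-(Complex.I * q) * v) * (1 - Complex.I * q * w)) /
            ((1 - Complex.I * q * w) * (1 - -(Complex.I * q) * v)) := by
          rw [add_div, div_mul_cancel_right₀ hne2, mul_comm (1 - Complex.I * q * w) (1 - _),
            mul_div_mul_right _ _ hne1, div_eq_mul_inv]
        rw [this, hden, hnum, mul_div_mul_left _ _ (by simpa using hq0')]
      rw [← add_mul, hstep]; ring)
  have k2 := hasSum_single (f := fun i : ℕ ⊕ ℕ =>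
      if (Sum.elim (fun n : ℕ => (n : ℤ) - m) (fun n : ℕ => -((n : ℤ) + 1) - m) i : ℤ) = 0 then
        (2 * Real.pi : ℂ) * (Sum.elim (fun n : ℕ => (Complex.I * q) ^ n)
          (fun n : ℕ => (-(Complex.I * q)) ^ (n + 1)) i : ℂ) else 0) (Sum.inl m) (by
    rintro (n | n) hn
    · have : n ≠ m := fun h => hn (by rw [h])
      exact if_neg (by simp only [Sum.elim_inl]; omega)
    · exact if_neg (by simp only [Sum.elim_inr]; omega))
  have k3 := k1.unique k2
  rw [intervalIntegral.integral_const_mul] at k3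
  simp only [Sum.elim_inl, sub_self, if_true] at k3
  have hrC : (r : ℂ) ≠ 0 := by exact_mod_cast hr0.ne'
  rw [eq_div_iff hrC, mul_comm, k3, hq]
  push_cast
  ring

lemma aux_integrable (m : ℕ) (c b : ℝ) (hb : 0 < b) :
    Integrable (fun p : ℝ × ℝ => Complex.exp (-((b : ℂ) - c * Complex.I) * p.1) *
      Complex.exp ((p.1 * Real.sin p.2 - m * p.2 : ℝ) * Complex.I))
      ((volume.restrict (Set.Ioi 0)).prod (volume.restrict (Set.Ioc 0 (2 * Real.pi)))) := by
  have h1 : Integrable (fun y : ℝ => Real.exp (-b * y)) (volume.restrict (Set.Ioi 0)) :=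
    exp_neg_integrableOn_Ioi 0 hb
  have h2 : Integrable (fun _ : ℝ => (1 : ℝ)) (volume.restrict (Set.Ioc 0 (2 * Real.pi))) :=
    integrable_const _
  refine (h1.mul_prod h2).mono' (Continuous.aestronglyMeasurable (by fun_prop)) (ae_of_all _ ?_)
  rintro ⟨y, θ⟩
  rw [norm_mul, Complex.norm_exp_ofReal_mul_I, Complex.norm_exp]
  simp

lemma aux_inner (m : ℕ) (c b y : ℝ) :
    ∫ θ in Set.Ioc 0 (2 * Real.pi), Complex.exp (-((b : ℂ) - c * Complex.I) * y) *
      Complex.exp ((y * Real.sin θ - m * θ : ℝ) * Complex.I) =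
    (2 * Real.pi : ℂ) * (Complex.exp (-((b : ℂ) - c * Complex.I) * y) * besselJr m y) := by
  rw [MeasureTheory.integral_const_mul, ← intervalIntegral.integral_of_le (by positivity),
    aux_bessel]
  ring

lemma aux_re (m : ℕ) (c b y : ℝ) :
    (Complex.exp (-((b : ℂ) - c * Complex.I) * y) * besselJr m y).re =
      Real.exp (-(b * y)) * besselJr m y * Real.cos (c * y) := by
  rw [Complex.re_mul_ofReal, Complex.exp_re]
  simp
  ring

lemma aux_intJ (m : ℕ) (c b : ℝ) (hb : 0 < b) :
    IntegrableOn (fun y : ℝ => Complex.exp (-((b : ℂ) - c * Complex.I) * y) * besselJr m y)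
      (Set.Ioi 0) := by
  have h := (aux_integrable m c b hb).integral_prod_left
  simp only [aux_inner] at h
  have hpi : (2 * Real.pi : ℂ) ≠ 0 := by simp [Real.pi_ne_zero]
  exact (integrable_const_mul_iff (isUnit_iff_ne_zero.mpr hpi) _).mp h

lemma aux_laplace (m : ℕ) (c b : ℝ) (hb : 0 < b) :
    (2 * Real.pi : ℂ) * ∫ y in Set.Ioi (0 : ℝ),
      Complex.exp (-((b : ℂ) - c * Complex.I) * y) * besselJr m y =
    ∫ θ in (0:ℝ)..(2 * Real.pi), Complex.exp (-(m * θ * Complex.I)) /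
      ((b : ℂ) - (c + Real.sin θ : ℝ) * Complex.I) := by
  rw [← MeasureTheory.integral_const_mul, intervalIntegral.integral_of_le (by positivity)]
  simp only [← aux_inner]
  rw [integral_integral_swap (aux_integrable m c b hb)]
  congr 1
  funext θ
  have hre : (-((b : ℂ) - (c + Real.sin θ : ℝ) * Complex.I)).re < 0 := by
    simp [hb]
  have h1 : ∀ y : ℝ, Complex.exp (-((b : ℂ) - c * Complex.I) * y) *
      Complex.exp ((y * Real.sin θ - m * θ : ℝ) * Complex.I) =
      Complex.exp (-(m * θ * Complex.I)) *
        Complex.exp (-((b : ℂ) - (c + Real.sin θ : ℝ) * Complex.I) * y) := by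
    intro y
    rw [← Complex.exp_add, ← Complex.exp_add]; congr 1; push_cast; ring
  simp_rw [h1]
  rw [MeasureTheory.integral_const_mul, integral_exp_mul_complex_Ioi hre]
  simp only [Complex.ofReal_zero, mul_zero, Complex.exp_zero]
  rw [neg_div_neg_eq, mul_one_div]

lemma aux_limit (m : ℕ) (c : ℝ) (hc : 1 < c) :
    Tendsto (fun b : ℝ => ∫ θ in (0:ℝ)..(2 * Real.pi), Complex.exp (-(m * θ * Complex.I)) /
      ((b : ℂ) - (c + Real.sin θ : ℝ) * Complex.I)) (nhdsWithin 0 (Set.Ioi 0))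
      (nhds (∫ θ in (0:ℝ)..(2 * Real.pi), Complex.exp (-(m * θ * Complex.I)) /
      (((0 : ℝ) : ℂ) - (c + Real.sin θ : ℝ) * Complex.I))) := by
  have him : ∀ b θ : ℝ, c - 1 ≤ ‖(b : ℂ) - (c + Real.sin θ : ℝ) * Complex.I‖ := by
    intro b θ
    have h1 := Complex.abs_im_le_norm ((b : ℂ) - (c + Real.sin θ : ℝ) * Complex.I)
    have h2 : ((b : ℂ) - (c + Real.sin θ : ℝ) * Complex.I).im = -(c + Real.sin θ) := by
      rw [Complex.sub_im, Complex.im_ofReal_mul, Complex.ofReal_im, Complex.I_im]; ring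
    rw [h2, abs_neg] at h1
    have := Real.neg_one_le_sin θ
    have := le_abs_self (c + Real.sin θ)
    linarith
  have hne : ∀ b θ : ℝ, (b : ℂ) - (c + Real.sin θ : ℝ) * Complex.I ≠ 0 := by
    intro b θ h
    have := him b θ
    rw [h, norm_zero] at this; linarith
  refine intervalIntegral.tendsto_integral_filter_of_dominated_convergence
    (fun _ => 1 / (c - 1)) ?_ ?_ (by simp) ?_
  · refine Eventually.of_forall fun b => Continuous.aestronglyMeasurable ?_
    exact Continuous.div (by fun_prop) (by fun_prop) (hne b)
  · refine Eventually.of_forall fun b => ae_of_all _ fun θ _ => ?_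
    have h1 : ‖Complex.exp (-(m * θ * Complex.I))‖ = 1 := by
      have := Complex.norm_exp_ofReal_mul_I (-(m * θ))
      rw [← this]; congr 2; push_cast; ring
    rw [norm_div, h1]
    exact one_div_le_one_div_of_le (by linarith) (him b θ)
  · refine ae_of_all _ fun θ _ => ?_
    have : Continuous fun b : ℝ => Complex.exp (-(m * θ * Complex.I)) /
      ((b : ℂ) - (c + Real.sin θ : ℝ) * Complex.I) :=
      Continuous.div (by fun_prop) (by fun_prop) (fun b => hne b θ)
    exact (this.tendsto 0).mono_left nhdsWithin_le_nhds

/-- Let `k ≥ 1` and `c > 1`.  Then, the integral being absolutely convergent for each `b > 0`,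
`lim_{b→0⁺} ∫₀^∞ e^{-by} J_{2k-1}(y) cos(cy) dy = (-1)^k / (√(c²-1) (c+√(c²-1))^{2k-1})`. -/
theorem abel_limit_cos_gt_one (k : ℕ) (hk : 1 ≤ k) (c : ℝ) (hc : 1 < c) :
    (∀ b : ℝ, 0 < b → IntegrableOn (fun y : ℝ =>
        Real.exp (-(b * y)) * besselJr (2 * k - 1) y * Real.cos (c * y)) (Set.Ioi 0)) ∧
    Tendsto (fun b : ℝ => ∫ y in Set.Ioi (0 : ℝ),
        Real.exp (-(b * y)) * besselJr (2 * k - 1) y * Real.cos (c * y))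
      (nhdsWithin 0 (Set.Ioi 0))
      (nhds ((-1 : ℝ) ^ k /
        (Real.sqrt (c ^ 2 - 1) * (c + Real.sqrt (c ^ 2 - 1)) ^ (2 * k - 1)))) := by
  have hpi : (2 * Real.pi : ℂ) ≠ 0 := by simp [Real.pi_ne_zero]
  constructor
  · intro b hb
    have h := (aux_intJ (2 * k - 1) c b hb).re
    refine h.congr (ae_of_all _ fun y => ?_)
    exact aux_re _ c b y
  · have hval : ∀ b : ℝ, 0 < b → ∫ y in Set.Ioi (0 : ℝ),
        Real.exp (-(b * y)) * besselJr (2 * k - 1) y * Real.cos (c * y) =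
        ((2 * Real.pi : ℂ)⁻¹ * ∫ θ in (0:ℝ)..(2 * Real.pi),
          Complex.exp (-((2 * k - 1 : ℕ) * θ * Complex.I)) /
          ((b : ℂ) - (c + Real.sin θ : ℝ) * Complex.I)).re := by
      intro b hb
      rw [← aux_laplace _ c b hb, inv_mul_cancel_left₀ hpi]
      simp_rw [← aux_re]
      exact integral_re (aux_intJ (2 * k - 1) c b hb)
    have hlim := (Complex.continuous_re.tendsto _).comp
      ((aux_limit (2 * k - 1) c hc).const_mul (2 * Real.pi : ℂ)⁻¹)
    have heq : ((2 * Real.pi : ℂ)⁻¹ * ∫ θ in (0:ℝ)..(2 * Real.pi),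
          Complex.exp (-((2 * k - 1 : ℕ) * θ * Complex.I)) /
          (((0 : ℝ) : ℂ) - (c + Real.sin θ : ℝ) * Complex.I)).re = (-1 : ℝ) ^ k /
        (Real.sqrt (c ^ 2 - 1) * (c + Real.sqrt (c ^ 2 - 1)) ^ (2 * k - 1)) := by
      have h1 : ∀ θ : ℝ, Complex.exp (-((2 * k - 1 : ℕ) * θ * Complex.I)) /
          (((0 : ℝ) : ℂ) - (c + Real.sin θ : ℝ) * Complex.I) =
          Complex.I * (Complex.exp (-((2 * k - 1 : ℕ) * θ * Complex.I)) /
            (c + Real.sin θ : ℝ)) := by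
        intro θ
        rw [Complex.ofReal_zero, zero_sub, ← mul_neg ((c + Real.sin θ : ℝ) : ℂ), div_mul_eq_div_div, div_eq_mul_inv _ (-Complex.I),
          inv_neg, Complex.inv_I, neg_neg, mul_comm]
      simp_rw [h1]
      rw [intervalIntegral.integral_const_mul, aux_poisson _ (by omega) c hc]
      have hI : Complex.I * Complex.I ^ (2 * k - 1) = (-1) ^ k := by
        rw [← pow_succ', show 2 * k - 1 + 1 = 2 * k by omega, pow_mul, Complex.I_sq]
      rw [← Complex.ofReal_re ((-1 : ℝ) ^ k /
        (Real.sqrt (c ^ 2 - 1) * (c + Real.sqrt (c ^ 2 - 1)) ^ (2 * k - 1)))]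
      congr 1
      push_cast
      rw [← hI, div_pow]
      field_simp
    rw [heq] at hlim
    refine hlim.congr' ?_
    filter_upwards [self_mem_nhdsWithin] with b hb
    exact (hval b hb).symm
end
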